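/- Let μ be an ergodic process on Σ = 𝒜^{ℤ_{≥0}^d} and for each n set k = k(n) = ⌊(log n^d)^{1/d}⌋. Then the empirical per-site k-block entropy h_x^{k,n} := H(𝜇̃_x^{k(n),n})/k(n)^d converges to the entropy rate h(μ) as n → ∞, for μ-almost every x. -/

import Mathlib

open MeasureTheory Filter Topology

namespace SRU1408

/-- A site of the lattice `ℤ_{≥0}^d`. -/
abbrev Site (d : ℕ) := Fin d → ℕ

/-- An infinite array over the alphabet `Fin A`, i.e. an element of `Σ = 𝒜^{ℤ_{≥0}^d}`. -/
abbrev Config (A d : ℕ) := Site d → Fin A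

/-- A cubical `k`-word, i.e. an element of `Σ^k = 𝒜^{Λ_k}`. -/
abbrev Word (A d k : ℕ) := (Fin d → Fin k) → Fin A

variable {A d : ℕ}

/-- The pattern of `x` on the cube `Λ_k + c`, as a `k`-word. -/
def wordAt (x : Config A d) (k : ℕ) (c : Site d) : Word A d k :=
  fun i => x fun j => c j + (i j : ℕ)

/-- The lattice shift `σ_r`. -/
def shift (r : Site d) (x : Config A d) : Config A d := fun i => x (i + r)

/-- Stationarity: invariance under all shifts. -/
def Stationary (μ : Measure (Config A d)) : Prop := ∀ r : Site d, μ.map (shift r) = μ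

/-- Ergodicity: stationary, and every measurable set invariant under all shifts is trivial. -/
def ErgodicShift (μ : Measure (Config A d)) : Prop :=
  Stationary μ ∧ ∀ E : Set (Config A d), MeasurableSet E →
    (∀ r : Site d, shift r ⁻¹' E = E) → μ E = 0 ∨ μ E = 1

/-- The `k`-word marginal distribution `μ^k`, as a probability vector on `Σ^k`. -/
noncomputable def wordDist (μ : Measure (Config A d)) (k : ℕ) : Word A d k → ℝ :=
  fun w => (μ {x | wordAt x k 0 = w}).toReal

/-- Base-`A` entropy of a probability vector. -/
noncomputable def entH (A : ℕ) {W : Type*} [Fintype W] (p : W → ℝ) : ℝ :=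
  -∑ w, p w * Real.logb A (p w)

/-- `μ` has entropy rate `h` (base-`A` logarithms): `H(μ^n)/n^d → h`. -/
def HasEntropyRate (μ : Measure (Config A d)) (h : ℝ) : Prop :=
  Tendsto (fun n : ℕ => entH A (wordDist μ n) / (n : ℝ) ^ d) atTop (𝓝 h)

/-- The empirical non-overlapping `k`-block distribution `𝜇̃_x^{k,n}` of `x` over `Λ_n`. -/
noncomputable def empDist (x : Config A d) (k n : ℕ) : Word A d k → ℝ := fun w =>
  (Set.ncard {r : Fin d → Fin (n / k) | wordAt x k (fun j => k * (r j : ℕ)) = w} : ℝ) /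
    ((n / k : ℕ) : ℝ) ^ d

/-- The empirical probability `𝜇̃_x^{k,n}(S)` of a set `S` of `k`-words. -/
noncomputable def empProb (x : Config A d) (k n : ℕ) (S : Set (Word A d k)) : ℝ :=
  (Set.ncard {r : Fin d → Fin (n / k) | wordAt x k (fun j => k * (r j : ℕ)) ∈ S} : ℝ) /
    ((n / k : ℕ) : ℝ) ^ d

/-- `k(n) = ⌊(log_A n^d)^{1/d}⌋`. -/
noncomputable def kOf (A d n : ℕ) : ℕ :=
  ⌊(Real.logb A ((n : ℝ) ^ d)) ^ (1 / (d : ℝ))⌋₊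

/-!
Lower bound. A word over `Λ_n` whose empirical `k`-block entropy is at most `c` per site has, under
the product of its own block frequencies, probability at least `A ^ (-c n^d)`. Since
`A ^ (k^d) ≤ n^d` while `k → ∞`, there are only `A ^ o(n^d)` possible block frequencies, hence at
most `A ^ (c n^d + o(n^d))` such words. By the Borel–Cantelli lemma almost every `x` eventually
avoids those among them of probability less than `A ^ (-c' n^d)`, where `c < c' < h`. The more
likely words are avoided as well: by ergodicity the set of points exhibiting them infinitely often
is null or conull, and in the second case large cubes can be packed almost entirely by such words,
which leaves about `A ^ (c' N^d)` words of side `N` carrying almost all the mass and contradicts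
the entropy rate `h`.

Upper bound. By Gibbs' inequality the block entropy is at most the average cost of any code for
`k`-blocks. Cut each block into `m`-words along a grid, code these by (a perturbation of) the
marginal `μ^m`, and average over the `m^d` positions of the grid: the total cost is an ergodic sum
of `-log μ^m`. The upper half of the pointwise ergodic theorem, which the same packing argument
proves, bounds it by `(h + ε) n^d` for large `m`.
-/

/-! ### Entropy -/

section Entropy

lemma neg_logb_midpoint_le (hA : 2 ≤ A) {a b : ℝ} (ha : 0 < a) (hb : 0 ≤ b) :
    -Real.logb A ((a + b) / 2) ≤ -Real.logb A a + 1 := by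
  have hA1 : (1 : ℝ) < A := by exact_mod_cast hA
  have htwo : Real.logb A 2 ≤ 1 := by
    rw [Real.logb_le_iff_le_rpow hA1 two_pos, Real.rpow_one]
    exact_mod_cast hA
  have hmono : Real.logb A (a / 2) ≤ Real.logb A ((a + b) / 2) :=
    Real.logb_le_logb_of_le hA1 (by positivity) (by linarith)
  rw [Real.logb_div ha.ne' two_ne_zero] at hmono
  linarith

variable {W : Type*} [Fintype W]

lemma neg_logb_nonneg_of_sum_eq_one (hA : 2 ≤ A) {q : W → ℝ} (hq : ∀ w, 0 < q w)
    (hq1 : ∑ w, q w = 1) (w : W) : 0 ≤ -Real.logb A (q w) :=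
  neg_nonneg.2 <| Real.logb_nonpos (by exact_mod_cast hA) (hq w).le <|
    hq1 ▸ Finset.single_le_sum (fun v _ => (hq v).le) (Finset.mem_univ w)

lemma entH_le_cross_entropy (hA : 2 ≤ A) (p q : W → ℝ) (hp : ∀ w, 0 ≤ p w)
    (hp1 : ∑ w, p w = 1) (hq : ∀ w, 0 < q w) (hq1 : ∑ w, q w ≤ 1) :
    entH A p ≤ ∑ w, p w * (-Real.logb A (q w)) := by
  have hlog : 0 < Real.log A := Real.log_pos (by exact_mod_cast hA)
  have hterm : ∀ w, p w * Real.logb A (q w) - p w * Real.logb A (p w) ≤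
      (q w - p w) / Real.log A := by
    intro w
    rcases (hp w).eq_or_lt with h0 | h0
    · have := (hq w).le
      simp only [← h0, zero_mul, sub_zero]
      positivity
    · rw [Real.logb, Real.logb, ← mul_sub, ← sub_div, ← Real.log_div (hq w).ne' h0.ne',
        ← mul_div_assoc]
      gcongr
      calc p w * Real.log (q w / p w) ≤ p w * (q w / p w - 1) := by
            gcongr
            exact Real.log_le_sub_one_of_pos (div_pos (hq w) h0)
        _ = q w - p w := by field_simp
  have hsum := Finset.sum_le_sum fun w (_ : w ∈ Finset.univ) => hterm w
  rw [Finset.sum_sub_distrib, ← Finset.sum_div, Finset.sum_sub_distrib, hp1] at hsum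
  have : (∑ w, q w - 1) / Real.log A ≤ 0 :=
    div_nonpos_of_nonpos_of_nonneg (by linarith) hlog.le
  simp only [entH, mul_neg, Finset.sum_neg_distrib]
  linarith

lemma sum_indicator_const (S : Set W) (K : ℝ) :
    ∑ w, S.indicator (fun _ => K) w = S.ncard * K := by
  classical
  simp only [Set.indicator_apply]
  rw [← Finset.sum_filter, Finset.sum_const, Set.ncard_eq_toFinset_card', nsmul_eq_mul]
  congr 3
  ext
  simp

-- Gibbs' inequality against the average of `1 / K` on `S` and the uniform distribution.
lemma entH_le_of_concentrated (hA : 2 ≤ A) (p : W → ℝ) (hp : ∀ w, 0 ≤ p w)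
    (hp1 : ∑ w, p w = 1) (S : Set W) {K : ℝ} (hK : 1 ≤ K) (hS : (S.ncard : ℝ) ≤ K) :
    entH A p ≤ Real.logb A K + 1 + (∑ w, Sᶜ.indicator p w) * Real.logb A (Fintype.card W) := by
  have hA1 : (1 : ℝ) < A := by exact_mod_cast hA
  have : Nonempty W := by
    by_contra hne
    rw [not_nonempty_iff] at hne
    simp at hp1
  have hC : (1 : ℝ) ≤ Fintype.card W := by exact_mod_cast Fintype.card_pos
  set C : ℝ := (Fintype.card W : ℝ) with hCdef
  have hSnonneg : ∀ w, 0 ≤ S.indicator (fun _ => K⁻¹) w :=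
    Set.indicator_nonneg fun _ _ => by positivity
  let q : W → ℝ := fun w => (C⁻¹ + S.indicator (fun _ => K⁻¹) w) / 2
  have hq : ∀ w, 0 < q w := fun w => by have := hSnonneg w; positivity
  have hq1 : ∑ w, q w ≤ 1 := by
    rw [← Finset.sum_div, Finset.sum_add_distrib, sum_indicator_const, Finset.sum_const,
      nsmul_eq_mul, Finset.card_univ, ← hCdef, mul_inv_cancel₀ (by positivity)]
    have : (S.ncard : ℝ) * K⁻¹ ≤ 1 := div_le_one_of_le₀ hS (by positivity)
    linarith
  have hlK : 0 ≤ Real.logb A K := Real.logb_nonneg hA1 hK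
  have hterm : ∀ w, p w * (-Real.logb A (q w)) ≤
      p w * (Real.logb A K + 1) + Sᶜ.indicator p w * Real.logb A C := by
    intro w
    by_cases hw : w ∈ S
    · have hqw : q w = (K⁻¹ + C⁻¹) / 2 := by simp only [q, Set.indicator_of_mem hw, add_comm]
      rw [Set.indicator_of_notMem (Set.notMem_compl_iff.2 hw), zero_mul, add_zero, hqw]
      refine mul_le_mul_of_nonneg_left ?_ (hp w)
      have := neg_logb_midpoint_le hA (a := K⁻¹) (b := C⁻¹) (by positivity) (by positivity)
      rwa [Real.logb_inv, neg_neg] at this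
    · rw [Set.indicator_of_mem (Set.mem_compl hw), ← mul_add]
      refine mul_le_mul_of_nonneg_left ?_ (hp w)
      have := neg_logb_midpoint_le hA (a := C⁻¹) (by positivity) (hSnonneg w)
      simp only [Real.logb_inv, neg_neg] at this
      simp only [q]
      linarith
  calc entH A p ≤ ∑ w, p w * (-Real.logb A (q w)) := entH_le_cross_entropy hA p q hp hp1 hq hq1
    _ ≤ ∑ w, (p w * (Real.logb A K + 1) + Sᶜ.indicator p w * Real.logb A C) :=
        Finset.sum_le_sum fun w _ => hterm w
    _ = _ := by rw [Finset.sum_add_distrib, ← Finset.sum_mul, ← Finset.sum_mul, hp1, one_mul]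

end Entropy

/-! ### Cubes and packings -/

/-- The cube `Λ_n + r`. -/
def cube (r : Site d) (n : ℕ) : Finset (Site d) :=
  Fintype.piFinset fun j => Finset.Ico (r j) (r j + n)

lemma mem_cube {r t : Site d} {n : ℕ} : t ∈ cube r n ↔ ∀ j, r j ≤ t j ∧ t j < r j + n := by
  simp [cube]

lemma mem_cube_zero {t : Site d} {n : ℕ} : t ∈ cube 0 n ↔ ∀ j, t j < n := by
  simp [mem_cube]

lemma card_cube (r : Site d) (n : ℕ) : (cube r n).card = n ^ d := by
  simp [cube]

lemma self_mem_cube {r : Site d} {n : ℕ} (hn : 1 ≤ n) : r ∈ cube r n :=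
  mem_cube.2 fun _ => ⟨le_rfl, by omega⟩

lemma cube_mono (r : Site d) {m n : ℕ} (h : m ≤ n) : cube r m ⊆ cube r n := fun _ ht =>
  mem_cube.2 fun j => ⟨(mem_cube.1 ht j).1, (mem_cube.1 ht j).2.trans_le (by omega)⟩

lemma cube_subset_cube_zero {r : Site d} {m M N : ℕ} (hm : m ≤ M) (hr : r ∈ cube 0 (N - M)) :
    cube r m ⊆ cube 0 N := fun t ht => mem_cube_zero.2 fun j => by
  have := mem_cube_zero.1 hr j
  have := (mem_cube.1 ht j).2
  omega

lemma cube_eq_map (r : Site d) (n : ℕ) :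
    cube r n = (cube 0 n).map (addRightEmbedding r) := by
  ext t
  simp only [mem_cube, Finset.mem_map, addRightEmbedding_apply, Pi.zero_apply, zero_le, zero_add,
    true_and]
  refine ⟨fun h => ⟨t - r, fun j => ?_, funext fun j => Nat.sub_add_cancel (h j).1⟩, ?_⟩
  · have := h j
    simp only [Pi.sub_apply]
    omega
  · rintro ⟨s, hs, rfl⟩ j
    have := hs j
    simp only [Pi.add_apply]
    omega

lemma sum_cube {α : Type*} [AddCommMonoid α] (r : Site d) (n : ℕ) (f : Site d → α) :
    ∑ t ∈ cube r n, f t = ∑ t ∈ cube 0 n, f (t + r) := by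
  rw [cube_eq_map, Finset.sum_map]
  rfl

/-- A box containing the corners `r` of all cubes of side `m` that meet `Λ_n + s`. -/
def cornerBox (s : Site d) (n m : ℕ) : Finset (Site d) :=
  Fintype.piFinset fun j => Finset.Ico (s j + 1 - m) (s j + n)

lemma card_cornerBox_le (s : Site d) (n m : ℕ) : (cornerBox s n m).card ≤ (n + m) ^ d := by
  rw [cornerBox, Fintype.card_piFinset]
  calc _ ≤ ∏ _j : Fin d, (n + m) := Finset.prod_le_prod' fun j _ => by
        rw [Nat.card_Ico]; omega
    _ = _ := by simp

lemma mem_cornerBox_of_not_disjoint {r s : Site d} {n m : ℕ}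
    (h : ¬ Disjoint (cube r m) (cube s n)) : r ∈ cornerBox s n m := by
  obtain ⟨t, htr, hts⟩ := Finset.not_disjoint_iff.1 h
  simp only [cornerBox, Fintype.mem_piFinset, Finset.mem_Ico]
  intro j
  have := mem_cube.1 htr j
  have := mem_cube.1 hts j
  omega

-- Vitali's covering argument: greedily choose the largest remaining cube.
lemma exists_disjoint_cubes (n : Site d → ℕ) (T : Finset (Site d)) (hn : ∀ r ∈ T, 1 ≤ n r) :
    ∃ T' ⊆ T, (T' : Set (Site d)).PairwiseDisjoint (fun r => cube r (n r)) ∧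
      T.card ≤ 2 ^ d * ∑ r ∈ T', n r ^ d := by
  classical
  induction T using Finset.strongInduction with
  | H T ih =>
    rcases T.eq_empty_or_nonempty with rfl | hT
    · exact ⟨∅, by simp⟩
    obtain ⟨r₀, hr₀, hmax⟩ := T.exists_max_image n hT
    let T₁ := T.filter fun r => Disjoint (cube r (n r)) (cube r₀ (n r₀))
    have hT₁ : T₁ ⊆ T := Finset.filter_subset _ _
    have hr₀T₁ : r₀ ∉ T₁ := fun h => Finset.disjoint_left.1 (Finset.mem_filter.1 h).2
      (self_mem_cube (hn _ hr₀)) (self_mem_cube (hn _ hr₀))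
    obtain ⟨T', hT', hdisj, hcard⟩ :=
      ih T₁ (hT₁.ssubset_of_mem_notMem hr₀ hr₀T₁) fun r hr => hn r (hT₁ hr)
    refine ⟨insert r₀ T', Finset.insert_subset hr₀ (hT'.trans hT₁), ?_, ?_⟩
    · rw [Finset.coe_insert]
      exact hdisj.insert fun r hr _ => ((Finset.mem_filter.1 (hT' hr)).2).symm
    have hcover : T ⊆ cornerBox r₀ (n r₀) (n r₀) ∪ T₁ := by
      intro r hr
      by_cases h : Disjoint (cube r (n r)) (cube r₀ (n r₀))
      · exact Finset.mem_union_right _ (Finset.mem_filter.2 ⟨hr, h⟩)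
      · exact Finset.mem_union_left _ (mem_cornerBox_of_not_disjoint fun h' =>
          h (h'.mono_left (cube_mono _ (hmax r hr))))
    calc T.card ≤ (cornerBox r₀ (n r₀) (n r₀)).card + T₁.card :=
          (Finset.card_le_card hcover).trans (Finset.card_union_le _ _)
      _ ≤ (n r₀ + n r₀) ^ d + 2 ^ d * ∑ r ∈ T', n r ^ d :=
          add_le_add (card_cornerBox_le _ _ _) hcard
      _ = 2 ^ d * ∑ r ∈ insert r₀ T', n r ^ d := by
          rw [Finset.sum_insert fun h => hr₀T₁ (hT' h), mul_add, ← two_mul, mul_pow]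

/-- `P` is a disjoint family of cubes `Λ_n + r`, `(r, n) ∈ P`, inside `Λ_N`, with sides in
`[m, M]` and `r ∈ G n`. -/
structure IsPacking (G : ℕ → Set (Site d)) (m M N : ℕ) (P : Finset (Site d × ℕ)) : Prop where
  scale : ∀ p ∈ P, p.2 ∈ Set.Icc m M
  subset : ∀ p ∈ P, cube p.1 p.2 ⊆ cube 0 N
  disj : (P : Set (Site d × ℕ)).PairwiseDisjoint fun p => cube p.1 p.2
  good : ∀ p ∈ P, p.1 ∈ G p.2

/-- The number of sites covered by a packing. -/
def packVol (P : Finset (Site d × ℕ)) : ℕ := ∑ p ∈ P, p.2 ^ d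

section Packing

variable {G : ℕ → Set (Site d)} {m m' M M' N : ℕ} {P Q : Finset (Site d × ℕ)}

lemma IsPacking.packVol_le (hP : IsPacking G m M N P) : packVol P ≤ N ^ d := by
  classical
  rw [← card_cube 0 N, packVol, ← Finset.sum_congr rfl fun p _ => card_cube p.1 p.2,
    ← Finset.card_biUnion fun x hx y hy hxy => hP.disj hx hy hxy]
  exact Finset.card_le_card (Finset.biUnion_subset.2 hP.subset)

lemma IsPacking.mono (hP : IsPacking G m' M' N P) (hm : m ≤ m') (hM : M' ≤ M) :
    IsPacking G m M N P :=
  { hP with scale := fun p hp => Set.Icc_subset_Icc hm hM (hP.scale p hp) }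

lemma IsPacking.union [DecidableEq (Site d × ℕ)] (hP : IsPacking G m M N P)
    (hQ : IsPacking G m M N Q)
    (hPQ : ∀ p ∈ P, ∀ q ∈ Q, Disjoint (cube p.1 p.2) (cube q.1 q.2)) :
    IsPacking G m M N (P ∪ Q) where
  scale p hp := (Finset.mem_union.1 hp).elim (hP.scale p) (hQ.scale p)
  subset p hp := (Finset.mem_union.1 hp).elim (hP.subset p) (hQ.subset p)
  disj := by
    rw [Finset.coe_union, Set.pairwiseDisjoint_union]
    exact ⟨hP.disj, hQ.disj, fun p hp q hq _ => hPQ p hp q hq⟩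
  good p hp := (Finset.mem_union.1 hp).elim (hP.good p) (hQ.good p)

lemma packVol_union [DecidableEq (Site d × ℕ)] (hQ : ∀ q ∈ Q, 1 ≤ q.2)
    (hPQ : ∀ p ∈ P, ∀ q ∈ Q, Disjoint (cube p.1 p.2) (cube q.1 q.2)) :
    packVol (P ∪ Q) = packVol P + packVol Q :=
  Finset.sum_union <| Finset.disjoint_left.2 fun q hqP hqQ =>
    Finset.disjoint_left.1 (hPQ q hqP q hqQ) (self_mem_cube (hQ q hqQ)) (self_mem_cube (hQ q hqQ))

lemma exists_isPacking (hm : 1 ≤ m) {T : Finset (Site d)} (hT : T ⊆ cube 0 (N - M))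
    (hgood : ∀ r ∈ T, ∃ n ∈ Set.Icc m M, r ∈ G n) :
    ∃ Q, IsPacking G m M N Q ∧ (∀ q ∈ Q, q.1 ∈ T) ∧ T.card ≤ 2 ^ d * packVol Q := by
  classical
  choose! n hscale hG using hgood
  obtain ⟨T', hT', hdisj, hcard⟩ := exists_disjoint_cubes n T fun r hr => hm.trans (hscale r hr).1
  have hinj : Function.Injective fun r => (r, n r) := fun a b h => (Prod.ext_iff.1 h).1
  refine ⟨T'.image fun r => (r, n r), ⟨?_, ?_, ?_, ?_⟩, ?_, ?_⟩
  · exact Finset.forall_mem_image.2 fun r hr => hscale r (hT' hr)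
  · exact Finset.forall_mem_image.2 fun r hr =>
      cube_subset_cube_zero (hscale r (hT' hr)).2 (hT (hT' hr))
  · rw [Finset.coe_image]
    exact (Set.InjOn.pairwiseDisjoint_image hinj.injOn).2 hdisj
  · exact Finset.forall_mem_image.2 fun r hr => hG r (hT' hr)
  · exact Finset.forall_mem_image.2 fun r hr => hT' hr
  · rwa [packVol, Finset.sum_image hinj.injOn]

-- Apply Vitali's lemma to the good corners whose cube of side `M` avoids all cubes of `P`.
lemma IsPacking.extend (hP : IsPacking G m' M' N P) (hm : 1 ≤ m) (hmm : m ≤ m')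
    (bad : Finset (Site d)) (hbad : ∀ r ∈ cube 0 N, r ∉ bad → ∃ n ∈ Set.Icc m M, r ∈ G n) :
    ∃ P', IsPacking G m (max M M') N P' ∧
      (N - M) ^ d + 2 ^ d * packVol P ≤
        bad.card + ∑ p ∈ P, (p.2 + M) ^ d + 2 ^ d * packVol P' := by
  classical
  let T := (cube 0 (N - M)).filter fun r => (∃ n ∈ Set.Icc m M, r ∈ G n) ∧
    ∀ p ∈ P, Disjoint (cube r M) (cube p.1 p.2)
  obtain ⟨Q, hQ, hQT, hcard⟩ := exists_isPacking (N := N) hm (T := T) (Finset.filter_subset _ _)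
    fun r hr => (Finset.mem_filter.1 hr).2.1
  have hPQ : ∀ p ∈ P, ∀ q ∈ Q, Disjoint (cube p.1 p.2) (cube q.1 q.2) := fun p hp q hq =>
    (((Finset.mem_filter.1 (hQT q hq)).2.2 p hp).mono_left (cube_mono _ (hQ.scale q hq).2)).symm
  refine ⟨P ∪ Q, (hP.mono hmm (le_max_right _ _)).union (hQ.mono le_rfl (le_max_left _ _)) hPQ, ?_⟩
  have hcover : cube 0 (N - M) ⊆ (bad ∪ P.biUnion fun p => cornerBox p.1 p.2 M) ∪ T := by
    intro r hr
    simp only [Finset.mem_union, Finset.mem_biUnion]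
    by_cases hrbad : r ∈ bad
    · exact .inl (.inl hrbad)
    by_cases havoid : ∀ p ∈ P, Disjoint (cube r M) (cube p.1 p.2)
    · exact .inr (Finset.mem_filter.2
        ⟨hr, hbad r (cube_mono _ (Nat.sub_le _ _) hr) hrbad, havoid⟩)
    · push Not at havoid
      obtain ⟨p, hp, hmeet⟩ := havoid
      exact .inl (.inr ⟨p, hp, mem_cornerBox_of_not_disjoint hmeet⟩)
  have hnear : (P.biUnion fun p => cornerBox p.1 p.2 M).card ≤ ∑ p ∈ P, (p.2 + M) ^ d :=
    Finset.card_biUnion_le.trans (Finset.sum_le_sum fun p _ => card_cornerBox_le _ _ _)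
  calc (N - M) ^ d + 2 ^ d * packVol P
      ≤ bad.card + ∑ p ∈ P, (p.2 + M) ^ d + 2 ^ d * packVol Q + 2 ^ d * packVol P := by
        rw [← card_cube 0 (N - M)]
        have := Finset.card_le_card hcover
        have := Finset.card_union_le (bad ∪ P.biUnion fun p => cornerBox p.1 p.2 M) T
        have := Finset.card_union_le bad (P.biUnion fun p => cornerBox p.1 p.2 M)
        omega
    _ = _ := by rw [packVol_union (fun q hq => hm.trans (hQ.scale q hq).1) hPQ]; ring

end Packing

section Asymptotics

lemma eventually_add_pow_le (d M : ℕ) {η : ℝ} (hη : 0 < η) :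
    ∀ᶠ n : ℕ in atTop, ((n : ℝ) + M) ^ d ≤ (1 + η) * (n : ℝ) ^ d := by
  have hlim : Tendsto (fun n : ℕ => (1 + (M : ℝ) / n) ^ d) atTop (𝓝 ((1 + 0) ^ d)) :=
    (tendsto_const_nhds.add (tendsto_const_div_atTop_nhds_zero_nat _)).pow d
  rw [add_zero, one_pow] at hlim
  filter_upwards [hlim.eventually_le_const (show (1 : ℝ) < 1 + η by linarith),
    eventually_gt_atTop 0] with n hn hn0
  have : (0 : ℝ) < n := by exact_mod_cast hn0
  calc ((n : ℝ) + M) ^ d = (1 + (M : ℝ) / n) ^ d * (n : ℝ) ^ d := by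
        rw [← mul_pow]; congr 1; field_simp
    _ ≤ _ := by gcongr

lemma eventually_sub_pow_ge (d M : ℕ) {η : ℝ} (hη : 0 < η) :
    ∀ᶠ N : ℕ in atTop, (1 - η) * (N : ℝ) ^ d ≤ ((N - M : ℕ) : ℝ) ^ d := by
  filter_upwards [(tendsto_sub_atTop_nat M).eventually (eventually_add_pow_le d M hη),
    eventually_ge_atTop M] with N hN hMN
  rw [← Nat.cast_add, Nat.sub_add_cancel hMN] at hN
  have : 0 ≤ η ^ 2 * ((N - M : ℕ) : ℝ) ^ d := by positivity
  have : 0 ≤ (N : ℝ) ^ d := by positivity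
  rcases le_total η 1 with _ | _
  · nlinarith
  · exact (mul_nonpos_of_nonpos_of_nonneg (by linarith) this).trans (by positivity)

end Asymptotics

-- Here `u` is the fraction of `Λ_N` that `P` leaves uncovered.
lemma IsPacking.exists_extend {G : ℕ → Set (Site d)} {m m' M M' N : ℕ}
    {P : Finset (Site d × ℕ)} (hP : IsPacking G m' M' N P) (hm : 1 ≤ m) (hmm : m ≤ m') {u η : ℝ}
    (hη : 0 ≤ η) (hvol : (1 - u - η) * (N : ℝ) ^ d ≤ packVol P)
    (hM : ∀ n : ℕ, m' ≤ n → ((n : ℝ) + M) ^ d ≤ (1 + η) * (n : ℝ) ^ d)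
    (hN : (1 - η) * (N : ℝ) ^ d ≤ ((N - M : ℕ) : ℝ) ^ d) (bad : Finset (Site d))
    (hbad : ∀ r ∈ cube 0 N, r ∉ bad → ∃ n ∈ Set.Icc m M, r ∈ G n)
    (hcard : (bad.card : ℝ) ≤ η * (N : ℝ) ^ d) :
    ∃ P', IsPacking G m (max M M') N P' ∧
      (1 - (1 - (2 ^ d)⁻¹) * u - 4 * η) * (N : ℝ) ^ d ≤ packVol P' := by
  obtain ⟨P', hP', hcover⟩ := hP.extend hm hmm bad hbad
  refine ⟨P', hP', ?_⟩
  have hnear : ∑ p ∈ P, ((p.2 : ℝ) + M) ^ d ≤ (1 + η) * packVol P := by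
    rw [packVol, Nat.cast_sum, Finset.mul_sum]
    refine Finset.sum_le_sum fun p hp => ?_
    rw [Nat.cast_pow]
    exact hM _ (hP.scale p hp).1
  have hV : (packVol P : ℝ) ≤ (N : ℝ) ^ d := by exact_mod_cast hP.packVol_le
  have hcover' : ((N - M : ℕ) : ℝ) ^ d + 2 ^ d * packVol P ≤
      bad.card + ∑ p ∈ P, ((p.2 : ℝ) + M) ^ d + 2 ^ d * packVol P' := by exact_mod_cast hcover
  have hQ : (1 : ℝ) ≤ 2 ^ d := one_le_pow₀ one_le_two
  generalize (2 : ℝ) ^ d = Q at *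
  generalize (N : ℝ) ^ d = X at *
  refine le_of_mul_le_mul_left ?_ (zero_lt_one.trans_le hQ)
  have hleft : Q * ((1 - (1 - Q⁻¹) * u - 4 * η) * X) = (Q - (Q - 1) * u - Q * (4 * η)) * X := by
    field_simp
  have hvol' : (Q - 1) * ((1 - u - η) * X) ≤ (Q - 1) * packVol P := by gcongr
  have hηV : η * packVol P ≤ η * X := by gcongr
  have hηX : 0 ≤ (Q - 1) * (η * X) := by
    have : 0 ≤ X := (Nat.cast_nonneg _).trans hV
    have : 0 ≤ Q - 1 := by linarith
    positivity
  rw [hleft]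
  nlinarith

/-! ### Actions of `ℤ_{≥0}^d`: packings along orbits -/

section Limsup

variable {X : Type*} [MeasurableSpace X] {μ : Measure X}

lemma exists_measureReal_compl_biUnion_Icc_le [IsFiniteMeasure μ] {D : ℕ → Set X}
    (hD : ∀ n, MeasurableSet (D n)) (hio : ∀ᵐ x ∂μ, ∃ᶠ n in atTop, x ∈ D n) (m : ℕ) {ε : ℝ}
    (hε : 0 < ε) : ∃ M, μ.real (⋃ n ∈ Set.Icc m M, D n)ᶜ ≤ ε := by
  let B : ℕ → Set X := fun M => (⋃ n ∈ Set.Icc m M, D n)ᶜ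
  have hB : ∀ M, MeasurableSet (B M) := fun M =>
    (MeasurableSet.biUnion (Set.to_countable _) fun n _ => hD n).compl
  have hanti : Antitone B := fun a b hab =>
    Set.compl_subset_compl.2 (Set.biUnion_subset_biUnion_left (Set.Icc_subset_Icc_right hab))
  have hnull : μ (⋂ M, B M) = 0 := by
    refine measure_mono_null (t := {x | ¬∃ᶠ n in atTop, x ∈ D n}) ?_ (ae_iff.1 hio)
    intro x hx hfreq
    obtain ⟨n, hn, hxn⟩ := frequently_atTop.1 hfreq m
    exact Set.mem_iInter.1 hx n (Set.mem_biUnion (⟨hn, le_rfl⟩ : n ∈ Set.Icc m n) hxn)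
  have hlim := tendsto_measure_iInter_atTop (μ := μ) (fun M => (hB M).nullMeasurableSet) hanti
    ⟨0, measure_ne_top _ _⟩
  rw [hnull] at hlim
  obtain ⟨M, hM⟩ := (hlim.eventually_le_const (ENNReal.ofReal_pos.2 hε)).exists
  exact ⟨M, ENNReal.toReal_le_of_le_ofReal hε.le hM⟩

end Limsup

section Action

variable {X : Type*} [AddAction (Site d) X]

variable (d) in
/-- The sum of `f` over the translates of `x` by `Λ_n`. -/
noncomputable def ergSum (f : X → ℝ) (n : ℕ) (x : X) : ℝ := ∑ t ∈ cube (0 : Site d) n, f (t +ᵥ x)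

open Classical in
variable (d) in
/-- The sites `r` of `Λ_n` with `r +ᵥ x ∈ B`. -/
noncomputable def visits (B : Set X) (n : ℕ) (x : X) : Finset (Site d) :=
  (cube 0 n).filter fun r => r +ᵥ x ∈ B

variable (d) in
/-- The points `x` for which at least `v` sites of `Λ_N` can be packed by cubes `Λ_n + r` with
`r +ᵥ x ∈ D n` and sides `n ∈ [m, M]`. -/
def packable (D : ℕ → Set X) (m M N : ℕ) (v : ℝ) : Set X :=
  {x | ∃ P, IsPacking (fun n => {r : Site d | r +ᵥ x ∈ D n}) m M N P ∧ v ≤ packVol P}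

section ErgSum

variable {f : X → ℝ}

lemma ergSum_nonneg (hf : ∀ x, 0 ≤ f x) (n : ℕ) (x : X) : 0 ≤ ergSum d f n x :=
  Finset.sum_nonneg fun _ _ => hf _

lemma ergSum_vadd (f : X → ℝ) (n : ℕ) (r : Site d) (x : X) :
    ergSum d f n (r +ᵥ x) = ∑ t ∈ cube r n, f (t +ᵥ x) := by
  rw [sum_cube, ergSum]
  simp only [add_vadd]

lemma cube_subset_cube_add_sum (r : Site d) (n : ℕ) : cube r n ⊆ cube 0 (n + ∑ j, r j) :=
  fun t ht => mem_cube_zero.2 fun j => by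
    have := (mem_cube.1 ht j).2
    have : r j ≤ ∑ i, r i := Finset.single_le_sum (fun _ _ => Nat.zero_le _) (Finset.mem_univ j)
    omega

lemma ergSum_vadd_le (hf : ∀ x, 0 ≤ f x) (n : ℕ) (r : Site d) (x : X) :
    ergSum d f n (r +ᵥ x) ≤ ergSum d f (n + ∑ j, r j) x := by
  rw [ergSum_vadd]
  exact Finset.sum_le_sum_of_subset_of_nonneg (cube_subset_cube_add_sum r n) fun _ _ _ => hf _

lemma frequently_le_ergSum_of_vadd (hf : ∀ x, 0 ≤ f x) {a b : ℝ} (ha : 0 < a) (hab : a < b)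
    {r : Site d} {x : X} (h : ∃ᶠ n : ℕ in atTop, b * (n : ℝ) ^ d ≤ ergSum d f n (r +ᵥ x)) :
    ∃ᶠ n : ℕ in atTop, a * (n : ℝ) ^ d ≤ ergSum d f n x := by
  refine (tendsto_add_atTop_nat (∑ j, r j)).frequently ?_
  have hratio := eventually_add_pow_le d (∑ j, r j) (η := b / a - 1)
    (by rwa [sub_pos, one_lt_div ha])
  refine (h.and_eventually hratio).mono fun n ⟨hbn, hn⟩ => ?_
  calc a * ((n + ∑ j, r j : ℕ) : ℝ) ^ d ≤ a * ((1 + (b / a - 1)) * (n : ℝ) ^ d) := by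
        rw [Nat.cast_add]; gcongr
    _ = b * (n : ℝ) ^ d := by field_simp; ring
    _ ≤ ergSum d f (n + ∑ j, r j) x := hbn.trans (ergSum_vadd_le hf n r x)

lemma packable_subset_le_ergSum (hf : ∀ x, 0 ≤ f x) {c : ℝ} (hc : 0 ≤ c) {m M N : ℕ} {v : ℝ} :
    packable d (fun n => {y | c * (n : ℝ) ^ d ≤ ergSum d f n y}) m M N v ⊆
      {x | c * v ≤ ergSum d f N x} := by
  rintro x ⟨P, hP, hv⟩
  classical
  calc c * v ≤ c * packVol P := by gcongr
    _ = ∑ p ∈ P, c * (p.2 : ℝ) ^ d := by simp [packVol, Finset.mul_sum]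
    _ ≤ ∑ p ∈ P, ∑ t ∈ cube p.1 p.2, f (t +ᵥ x) :=
        Finset.sum_le_sum fun p hp => (hP.good p hp).trans_eq (ergSum_vadd f p.2 p.1 x)
    _ = ∑ t ∈ P.biUnion fun p => cube p.1 p.2, f (t +ᵥ x) := (Finset.sum_biUnion hP.disj).symm
    _ ≤ _ := Finset.sum_le_sum_of_subset_of_nonneg (Finset.biUnion_subset.2 hP.subset)
        fun _ _ _ => hf _

end ErgSum

lemma mem_visits {B : Set X} {n : ℕ} {x : X} {r : Site d} :
    r ∈ visits d B n x ↔ r ∈ cube 0 n ∧ r +ᵥ x ∈ B := by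
  simp [visits]

lemma packable_mono {D : ℕ → Set X} {m m' M N : ℕ} {v v' : ℝ} (hm : m ≤ m') (hv : v ≤ v') :
    packable d D m' M N v' ⊆ packable d D m M N v := fun _ ⟨P, hP, hvP⟩ =>
  ⟨P, hP.mono hm le_rfl, hv.trans hvP⟩

variable [MeasurableSpace X] {μ : Measure X}

variable (d) in
/-- With high probability, all but a fraction `u` of a large cube can be packed by large cubes
`Λ_n + r` with `r +ᵥ x ∈ D n`. -/
def PackingProperty (μ : Measure X) (D : ℕ → Set X) (u : ℝ) : Prop :=
  ∀ δ : ℝ, 0 < δ → ∀ m : ℕ, ∃ M : ℕ, ∀ᶠ N : ℕ in atTop,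
    μ.real (packable d D m M N ((1 - u - δ) * (N : ℝ) ^ d))ᶜ ≤ δ

lemma packingProperty_one (μ : Measure X) (D : ℕ → Set X) : PackingProperty d μ D 1 := by
  refine fun δ hδ m => ⟨0, .of_forall fun N => ?_⟩
  have huniv : packable d D m 0 N ((1 - 1 - δ) * (N : ℝ) ^ d) = Set.univ :=
    Set.eq_univ_of_forall fun x => by
      refine ⟨∅, ⟨by simp, by simp, by simp, by simp⟩, ?_⟩
      have : 0 ≤ δ * (N : ℝ) ^ d := by positivity
      simp only [packVol, Finset.sum_empty, Nat.cast_zero]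
      linarith
  rw [huniv, Set.compl_univ, measureReal_empty]
  exact hδ.le

section Invariant

variable [MeasurableConstVAdd (Site d) X]

lemma measurable_ergSum {f : X → ℝ} (hf : Measurable f) (n : ℕ) : Measurable (ergSum d f n) :=
  Finset.measurable_fun_sum _ fun t _ => hf.comp (measurable_const_vadd t)

variable [VAddInvariantMeasure (Site d) X μ]

lemma integrable_ergSum {f : X → ℝ} (hf : Integrable f μ) (n : ℕ) : Integrable (ergSum d f n) μ :=
  integrable_finsetSum _ fun t _ => (measurePreserving_vadd t μ).integrable_comp_of_integrable hf

lemma integral_ergSum {f : X → ℝ} (hf : Integrable f μ) (n : ℕ) :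
    ∫ x, ergSum d f n x ∂μ = (n : ℝ) ^ d * ∫ x, f x ∂μ := by
  have hvadd : ∀ t : Site d, ∫ x, f (t +ᵥ x) ∂μ = ∫ x, f x ∂μ := fun t => by
    have hmp := measurePreserving_vadd t μ
    rw [← integral_map hmp.aemeasurable (hmp.map_eq.symm ▸ hf.1), hmp.map_eq]
  have hint : ∀ t : Site d, Integrable (fun x => f (t +ᵥ x)) μ := fun t =>
    (measurePreserving_vadd t μ).integrable_comp_of_integrable hf
  simp only [ergSum, integral_finsetSum _ fun t _ => hint t, hvadd, Finset.sum_const, card_cube,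
    nsmul_eq_mul, Nat.cast_pow]

lemma mul_measureReal_le_ergSum_le {f : X → ℝ} (hf : Integrable f μ) (hf0 : ∀ x, 0 ≤ f x) {n : ℕ}
    (hn : 0 < n) (a : ℝ) : a * μ.real {x | a * (n : ℝ) ^ d ≤ ergSum d f n x} ≤ ∫ x, f x ∂μ := by
  have hmarkov := mul_meas_ge_le_integral_of_nonneg (μ := μ)
    (.of_forall (ergSum_nonneg (d := d) hf0 n)) (integrable_ergSum hf n) (a * (n : ℝ) ^ d)
  rw [integral_ergSum hf] at hmarkov
  refine le_of_mul_le_mul_left ?_ (show (0 : ℝ) < (n : ℝ) ^ d by positivity)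
  linarith

variable [IsFiniteMeasure μ]

lemma mul_measureReal_le_card_visits_le {B : Set X} (hB : MeasurableSet B) {n : ℕ} (hn : 0 < n)
    (η : ℝ) : η * μ.real {x | η * (n : ℝ) ^ d ≤ (visits d B n x).card} ≤ μ.real B := by
  have hmarkov := mul_measureReal_le_ergSum_le (d := d) (μ := μ)
    ((integrable_const (1 : ℝ)).indicator hB) (Set.indicator_nonneg fun _ _ => zero_le_one) hn η
  have hsum : ∀ x, ergSum d (B.indicator fun _ => (1 : ℝ)) n x = (visits d B n x).card := by
    classical simp [ergSum, visits, Set.indicator_apply]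
  simp only [hsum] at hmarkov
  exact hmarkov.trans_eq (integral_indicator_one hB)

lemma PackingProperty.step {D : ℕ → Set X} (hD : ∀ n, MeasurableSet (D n))
    (hio : ∀ᵐ x ∂μ, ∃ᶠ n in atTop, x ∈ D n) {u : ℝ} (h : PackingProperty d μ D u) :
    PackingProperty d μ D ((1 - (2 ^ d)⁻¹) * u) := by
  intro δ hδ m
  obtain ⟨η, rfl⟩ : ∃ η, δ = 4 * η := ⟨δ / 4, by ring⟩
  have hη : 0 < η := by linarith
  obtain ⟨M₁, hM₁⟩ := exists_measureReal_compl_biUnion_Icc_le hD hio (max m 1)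
    (show 0 < η * η by positivity)
  obtain ⟨m₀, hm₀⟩ := eventually_atTop.1 (eventually_add_pow_le d M₁ hη)
  obtain ⟨M₂, hM₂⟩ := h η hη (max m₀ (max m 1))
  refine ⟨max M₁ M₂, ?_⟩
  filter_upwards [hM₂, eventually_sub_pow_ge d M₁ hη, eventually_gt_atTop 0] with N hN hsub hN0
  set B : Set X := (⋃ n ∈ Set.Icc (max m 1) M₁, D n)ᶜ
  have hB : MeasurableSet B :=
    (MeasurableSet.biUnion (Set.to_countable _) fun n _ => hD n).compl
  have hvisits : μ.real {x | η * (N : ℝ) ^ d ≤ (visits d B N x).card} ≤ η :=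
    le_of_mul_le_mul_left ((mul_measureReal_le_card_visits_le hB hN0 η).trans hM₁) hη
  have hcover : (packable d D m (max M₁ M₂) N
      ((1 - (1 - (2 ^ d)⁻¹) * u - 4 * η) * (N : ℝ) ^ d))ᶜ ⊆
      (packable d D (max m₀ (max m 1)) M₂ N ((1 - u - η) * (N : ℝ) ^ d))ᶜ ∪
        {x | η * (N : ℝ) ^ d ≤ (visits d B N x).card} := by
    rw [Set.compl_subset_comm, Set.compl_union, compl_compl]
    rintro x ⟨⟨P, hP, hvol⟩, hcard⟩
    obtain ⟨P', hP', hvol'⟩ := hP.exists_extend (le_max_right m 1) (le_max_right _ _) hη.le hvol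
      (fun n hn => hm₀ n ((le_max_left _ _).trans hn)) hsub (visits d B N x)
      (fun r hr hrB => by simpa [B, mem_visits, hr, and_assoc] using hrB) (le_of_not_ge hcard)
    exact ⟨P', hP'.mono (le_max_left _ _) le_rfl, hvol'⟩
  linarith [(measureReal_mono (μ := μ) hcover).trans (measureReal_union_le _ _)]

theorem packingProperty_zero {D : ℕ → Set X} (hD : ∀ n, MeasurableSet (D n))
    (hio : ∀ᵐ x ∂μ, ∃ᶠ n in atTop, x ∈ D n) : PackingProperty d μ D 0 := by
  have hpow : ∀ j : ℕ, PackingProperty d μ D ((1 - (2 ^ d)⁻¹) ^ j) := by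
    intro j
    induction j with
    | zero => simpa using packingProperty_one μ D
    | succ j ih => rw [pow_succ']; exact ih.step hD hio
  intro δ hδ m
  have hQ : (1 : ℝ) ≤ 2 ^ d := one_le_pow₀ one_le_two
  have hlim := tendsto_pow_atTop_nhds_zero_of_lt_one (r := 1 - ((2 : ℝ) ^ d)⁻¹)
    (by linarith [inv_le_one_of_one_le₀ hQ]) (by linarith [inv_pos.2 (zero_lt_one.trans_le hQ)])
  obtain ⟨j, hj⟩ := (hlim.eventually_le_const (half_pos hδ)).exists
  obtain ⟨M, hM⟩ := hpow j (δ / 2) (half_pos hδ) m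
  refine ⟨M, hM.mono fun N hN => ?_⟩
  have hsub : packable d D m M N ((1 - (1 - (2 ^ d)⁻¹) ^ j - δ / 2) * (N : ℝ) ^ d) ⊆
      packable d D m M N ((1 - 0 - δ) * (N : ℝ) ^ d) :=
    packable_mono le_rfl (mul_le_mul_of_nonneg_right (by linarith) (by positivity))
  exact (measureReal_mono (Set.compl_subset_compl.2 hsub)).trans (hN.trans (half_le_self hδ.le))

end Invariant

/-! ### The upper half of the pointwise ergodic theorem -/

section ErgodicTheorem

variable [MeasurableConstVAdd (Site d) X] [IsProbabilityMeasure μ] {f : X → ℝ}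

lemma ae_notMem_or_ae_mem [ErgodicVAdd (Site d) X μ] {L L' : Set X} (hL' : MeasurableSet L')
    (h : ∀ r : Site d, L ⊆ (r +ᵥ ·) ⁻¹' L') : (∀ᵐ x ∂μ, x ∉ L) ∨ ∀ᵐ x ∂μ, x ∈ L' := by
  let E : Set X := ⋂ r : Site d, (r +ᵥ ·) ⁻¹' L'
  have hE : MeasurableSet E := MeasurableSet.iInter fun r => measurable_const_vadd r hL'
  have hinv : ∀ s : Site d, E ⊆ (s +ᵥ ·) ⁻¹' E := fun s x hx => Set.mem_iInter.2 fun r => by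
    simpa only [Set.mem_preimage, add_vadd] using Set.mem_iInter.1 hx (r + s)
  have hae : ∀ s : Site d, (s +ᵥ ·) ⁻¹' E =ᵐ[μ] E := fun s =>
    (ae_eq_of_subset_of_measure_ge (hinv s)
      ((measurePreserving_vadd s μ).measure_preimage hE.nullMeasurableSet).le
      hE.nullMeasurableSet (measure_ne_top _ _)).symm
  rcases eventuallyConst_set.1
    (ErgodicVAdd.aeconst_of_forall_preimage_vadd_ae_eq hE hae) with hmem | hnotMem
  · refine .inr (hmem.mono fun x hx => ?_)
    simpa using Set.mem_iInter.1 hx 0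
  · exact .inl (hnotMem.mono fun x hx hxL => hx (Set.subset_iInter h hxL))

lemma le_integral_of_frequently_le_ergSum [VAddInvariantMeasure (Site d) X μ] (hfm : Measurable f)
    (hf : ∀ x, 0 ≤ f x) (hfi : Integrable f μ) {c : ℝ} (hc : 0 ≤ c)
    (hio : ∀ᵐ x ∂μ, ∃ᶠ n : ℕ in atTop, c * (n : ℝ) ^ d ≤ ergSum d f n x) : c ≤ ∫ x, f x ∂μ := by
  have hdelta : ∀ δ ∈ Set.Ioo (0 : ℝ) 1, c * (1 - δ) * (1 - δ) ≤ ∫ x, f x ∂μ := by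
    rintro δ ⟨hδ0, hδ1⟩
    obtain ⟨M, hM⟩ := packingProperty_zero (d := d) (μ := μ)
      (fun n => measurableSet_le measurable_const (measurable_ergSum hfm n)) hio δ hδ0 0
    obtain ⟨N, hN, hN0⟩ := (hM.and (eventually_gt_atTop 0)).exists
    set S := {x | c * (1 - δ) * (N : ℝ) ^ d ≤ ergSum d f N x}
    have hS : MeasurableSet S := measurableSet_le measurable_const (measurable_ergSum hfm N)
    have hSc : μ.real Sᶜ ≤ δ := by
      refine (measureReal_mono (Set.compl_subset_compl.2 ?_)).trans hN
      simpa only [S, sub_zero, mul_assoc] using packable_subset_le_ergSum hf hc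
    rw [probReal_compl_eq_one_sub hS] at hSc
    refine le_trans ?_ (mul_measureReal_le_ergSum_le (d := d) hfi hf hN0 (c * (1 - δ)))
    exact mul_le_mul_of_nonneg_left (by linarith) (mul_nonneg hc (by linarith))
  have hlim : Tendsto (fun δ : ℝ => c * (1 - δ) * (1 - δ)) (𝓝[>] 0) (𝓝 (c * (1 - 0) * (1 - 0))) :=
    ((by fun_prop : Continuous fun δ : ℝ => c * (1 - δ) * (1 - δ)).tendsto 0).mono_left
      nhdsWithin_le_nhds
  simp only [sub_zero, mul_one] at hlim
  exact le_of_tendsto hlim (by filter_upwards [Ioo_mem_nhdsGT one_pos] with δ hδ using hdelta δ hδ)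

theorem ae_eventually_ergSum_lt [ErgodicVAdd (Site d) X μ] (hfm : Measurable f)
    (hf : ∀ x, 0 ≤ f x) (hfi : Integrable f μ) {c : ℝ} (hc : ∫ x, f x ∂μ < c) :
    ∀ᵐ x ∂μ, ∀ᶠ n : ℕ in atTop, ergSum d f n x < c * (n : ℝ) ^ d := by
  obtain ⟨a, ha, hac⟩ := exists_between hc
  have ha0 : 0 < a := (integral_nonneg hf).trans_lt ha
  let D : ℝ → ℕ → Set X := fun a n => {x | a * (n : ℝ) ^ d ≤ ergSum d f n x}
  have hD : ∀ a, MeasurableSet (limsup (D a) atTop) := fun a => .measurableSet_limsup fun n =>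
    measurableSet_le measurable_const (measurable_ergSum hfm n)
  have hvadd : ∀ r : Site d, (limsup (D a) atTop)ᶜ ⊆ (r +ᵥ ·) ⁻¹' (limsup (D c) atTop)ᶜ := by
    intro r x hx hrx
    rw [mem_limsup_iff_frequently_mem] at hrx
    exact hx (mem_limsup_iff_frequently_mem.2 (frequently_le_ergSum_of_vadd hf ha0 hac hrx))
  rcases ae_notMem_or_ae_mem (μ := μ) (hD c).compl hvadd with hfreq | hevent
  · refine absurd (le_integral_of_frequently_le_ergSum (d := d) hfm hf hfi ha0.le ?_) ha.not_ge
    exact hfreq.mono fun x hx => mem_limsup_iff_frequently_mem.1 (not_not.1 hx)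
  · filter_upwards [hevent] with x hx
    rw [Set.mem_compl_iff, mem_limsup_iff_frequently_mem, not_frequently] at hx
    exact hx.mono fun n hn => not_le.1 hn

end ErgodicTheorem

end Action

/-! ### The shift action -/

section Shift

instance : AddAction (Site d) (Config A d) where
  vadd := shift
  zero_vadd _ := rfl
  add_vadd r s x := funext fun i => congrArg x (add_assoc i r s).symm

lemma vadd_eq_shift (r : Site d) (x : Config A d) : r +ᵥ x = shift r x := rfl

lemma wordAt_vadd (x : Config A d) (n : ℕ) (r c : Site d) :
    wordAt (r +ᵥ x) n c = wordAt x n (c + r) := by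
  funext i
  simp only [vadd_eq_shift, wordAt, shift]
  congr 1
  funext j
  simp only [Pi.add_apply]
  ring

lemma measurable_wordAt (n : ℕ) (c : Site d) : Measurable fun x : Config A d => wordAt x n c :=
  measurable_pi_lambda _ fun i => measurable_pi_apply fun j => c j + (i j : ℕ)

instance : MeasurableConstVAdd (Site d) (Config A d) where
  measurable_const_vadd r := measurable_pi_lambda _ fun i => measurable_pi_apply (i + r)

variable {μ : Measure (Config A d)}

lemma Stationary.vaddInvariantMeasure (hμ : Stationary μ) :
    VAddInvariantMeasure (Site d) (Config A d) μ where
  measure_preimage_vadd r s hs := by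
    conv_rhs => rw [← hμ r]
    exact (Measure.map_apply (measurable_const_vadd r) hs).symm

-- An almost invariant set `E` agrees almost everywhere with the set of points whose orbit is
-- eventually in `E`, which is strictly invariant.
lemma ErgodicShift.ergodicVAdd [IsProbabilityMeasure μ] (hμ : ErgodicShift μ) :
    ErgodicVAdd (Site d) (Config A d) μ := by
  have := hμ.1.vaddInvariantMeasure
  refine { aeconst_of_forall_preimage_vadd_ae_eq := fun {E} hE hinv => ?_ }
  let F : Set (Config A d) := ⋃ r : Site d, ⋂ s : Site d, ((r + s) +ᵥ ·) ⁻¹' E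
  have hF : MeasurableSet F := .iUnion fun r => .iInter fun s => measurable_const_vadd (r + s) hE
  have hFE : F =ᵐ[μ] E := by
    have := Filter.EventuallyEq.countable_iUnion fun r : Site d =>
      Filter.EventuallyEq.countable_iInter fun s : Site d => hinv (r + s)
    simpa only [Set.iInter_const, Set.iUnion_const] using this
  have hFinv : ∀ t : Site d, shift t ⁻¹' F = F := fun t => by
    ext x
    simp only [F, Set.mem_preimage, Set.mem_iUnion, Set.mem_iInter, ← vadd_eq_shift, ← add_vadd]
    constructor
    · rintro ⟨r, hr⟩
      exact ⟨r + t, fun s => by simpa only [add_right_comm] using hr s⟩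
    · rintro ⟨r, hr⟩
      exact ⟨r, fun s => by simpa only [add_assoc] using hr (s + t)⟩
  refine EventuallyConst.congr (eventuallyConst_set'.2 ?_) hFE
  rcases hμ.2 F hF hFinv with hzero | hone
  · exact .inl (ae_eq_empty.2 hzero)
  · exact .inr (ae_eq_univ.2 ((prob_compl_eq_zero_iff hF).2 hone))

end Shift

/-! ### Words packed by few words are few -/

section Counting

variable {ι S α : Type*} [Fintype ι] {V : ι → Type*} [∀ i, Fintype (V i)]
  [Fintype S] [Fintype α]

lemma sum_prod_comp_sigma [∀ i, DecidableEq (V i)] [DecidableEq S] {R : Type*} [CommSemiring R]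
    (e : (Σ i, V i) → S) (he : Function.Injective e) (F : (i : ι) → (V i → α) → R) :
    ∑ w : S → α, ∏ i, F i (fun v => w (e ⟨i, v⟩)) =
      (∏ i, ∑ v, F i v) * (Fintype.card α : R) ^ (Fintype.card S - ∑ i, Fintype.card (V i)) := by
  classical
  let Φ : (S → α) ≃ (((i : ι) → V i → α) × ({s // s ∉ Set.range e} → α)) :=
    (Equiv.piEquivPiSubtypeProd (fun s => s ∈ Set.range e) (fun _ => α)).trans
      (Equiv.prodCongr (((Equiv.ofInjective e he).symm.arrowCongr (Equiv.refl α)).trans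
        (Equiv.piCurry (fun _ _ => α))) (Equiv.refl _))
  have hcard : Fintype.card {s // s ∉ Set.range e} =
      Fintype.card S - ∑ i, Fintype.card (V i) := by
    rw [Fintype.card_subtype_compl, ← Fintype.card_sigma]
    congr 1
    exact (Fintype.card_congr (Equiv.ofInjective e he)).symm
  calc ∑ w : S → α, ∏ i, F i (fun v => w (e ⟨i, v⟩))
      = ∑ z : ((i : ι) → V i → α) × ({s // s ∉ Set.range e} → α), ∏ i, F i (z.1 i) :=
        Fintype.sum_equiv Φ _ _ fun _ => rfl
    _ = _ := by
        rw [Fintype.sum_prod_type]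
        simp only [Finset.sum_const, Finset.card_univ, nsmul_eq_mul]
        rw [Fintype.card_fun, hcard, ← Finset.mul_sum, mul_comm, Nat.cast_pow,
          Finset.prod_univ_sum, Fintype.piFinset_univ]

lemma ncard_forall_comp_sigma_mem (e : (Σ i, V i) → S) (he : Function.Injective e)
    (T : (i : ι) → Set (V i → α)) :
    ({w : S → α | ∀ i, (fun v => w (e ⟨i, v⟩)) ∈ T i}.ncard : ℝ) =
      (∏ i, ((T i).ncard : ℝ)) *
        (Fintype.card α : ℝ) ^ (Fintype.card S - ∑ i, Fintype.card (V i)) := by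
  classical
  have hcount : ∀ i, ((T i).ncard : ℝ) = ∑ v, (T i).indicator (fun _ => 1) v := fun i => by
    rw [sum_indicator_const, mul_one]
  rw [← mul_one (Set.ncard _ : ℝ), ← sum_indicator_const, Finset.prod_congr rfl fun i _ => hcount i,
    ← sum_prod_comp_sigma e he fun i => (T i).indicator fun _ => (1 : ℝ)]
  refine Finset.sum_congr rfl fun w _ => ?_
  simp only [Set.indicator_apply, Set.mem_ofPred_eq, Finset.prod_ite_zero, Finset.prod_const_one,
    Finset.mem_univ, true_imp_iff]

end Counting

section PackedWords

lemma IsPacking.subset_product {G : ℕ → Set (Site d)} {m M N : ℕ} {P : Finset (Site d × ℕ)}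
    (hP : IsPacking G m M N P) (hm : 1 ≤ m) : P ⊆ cube 0 N ×ˢ Finset.Icc m M := fun p hp =>
  Finset.mem_product.2 ⟨hP.subset p hp (self_mem_cube (hm.trans (hP.scale p hp).1)),
    Finset.mem_Icc.2 (hP.scale p hp)⟩

lemma IsPacking.exists_injective_sigma {G : ℕ → Set (Site d)} {m M N : ℕ}
    {P : Finset (Site d × ℕ)} (hP : IsPacking G m M N P) :
    ∃ e : (Σ p : P, Fin d → Fin p.1.2) → (Fin d → Fin N), Function.Injective e ∧
      ∀ q j, (e q j : ℕ) = q.1.1.1 j + q.2 j := by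
  have hmem : ∀ q : (Σ p : P, Fin d → Fin p.1.2),
      (fun j => q.1.1.1 j + (q.2 j : ℕ)) ∈ cube q.1.1.1 q.1.1.2 := fun q =>
    mem_cube.2 fun j => ⟨by omega, by have := (q.2 j).2; omega⟩
  refine ⟨fun q j => ⟨q.1.1.1 j + q.2 j,
    mem_cube_zero.1 (hP.subset q.1.1 q.1.2 (hmem q)) j⟩, fun q q' h => ?_, fun q j => rfl⟩
  have hval : (fun j => q.1.1.1 j + (q.2 j : ℕ)) = fun j => q'.1.1.1 j + (q'.2 j : ℕ) :=
    funext fun j => congrArg Fin.val (congrFun h j)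
  obtain ⟨p, i⟩ := q
  obtain ⟨p', i'⟩ := q'
  have hpp : p = p' := by
    by_contra hne
    exact Finset.disjoint_left.1 (hP.disj p.2 p'.2 fun h => hne (Subtype.ext h))
      (hmem ⟨p, i⟩) (hval ▸ hmem ⟨p', i'⟩)
  subst hpp
  congr 1
  exact funext fun j => Fin.ext (Nat.add_left_cancel (congrFun hval j))

lemma IsPacking.ncard_image_wordAt_le (hA : 2 ≤ A) {c : ℝ} (S : ∀ n, Set (Word A d n))
    (hS : ∀ n, ((S n).ncard : ℝ) ≤ (A : ℝ) ^ (c * (n : ℝ) ^ d)) {G : ℕ → Set (Site d)}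
    {m M N : ℕ} {P : Finset (Site d × ℕ)} (hP : IsPacking G m M N P) :
    (((wordAt · N 0) '' {x : Config A d | ∀ p ∈ P, wordAt x p.2 p.1 ∈ S p.2}).ncard : ℝ) ≤
      (A : ℝ) ^ (c * packVol P + ((N : ℝ) ^ d - packVol P)) := by
  classical
  have hA0 : (0 : ℝ) < A := by positivity
  obtain ⟨e, he, heval⟩ := hP.exists_injective_sigma
  have hsub : (wordAt · N 0) '' {x : Config A d | ∀ p ∈ P, wordAt x p.2 p.1 ∈ S p.2} ⊆
      {w | ∀ p : P, (fun v => w (e ⟨p, v⟩)) ∈ S p.1.2} := by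
    rintro _ ⟨x, hx, rfl⟩ p
    convert hx p.1 p.2 using 1
    funext v
    simp [wordAt, heval]
  have hvol : ∑ p : P, Fintype.card (Fin d → Fin p.1.2) = packVol P := by
    rw [packVol, ← Finset.sum_coe_sort P]
    simp
  calc _ ≤ (({w | ∀ p : P, (fun v => w (e ⟨p, v⟩)) ∈ S p.1.2} : Set (Word A d N)).ncard : ℝ) := by
        exact_mod_cast Set.ncard_le_ncard hsub (Set.toFinite _)
    _ = (∏ p : P, ((S p.1.2).ncard : ℝ)) * (A : ℝ) ^ ((N : ℝ) ^ d - packVol P) := by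
        rw [ncard_forall_comp_sigma_mem e he, hvol, ← Real.rpow_natCast]
        simp only [Fintype.card_fin, Fintype.card_fun]
        rw [Nat.cast_sub hP.packVol_le, Nat.cast_pow]
    _ ≤ (∏ p : P, (A : ℝ) ^ (c * (p.1.2 : ℝ) ^ d)) * (A : ℝ) ^ ((N : ℝ) ^ d - packVol P) := by
        gcongr with p
        exact hS _
    _ = _ := by
        rw [Finset.prod_coe_sort P fun p => (A : ℝ) ^ (c * (p.2 : ℝ) ^ d),
          ← Real.rpow_sum_of_pos hA0, ← Real.rpow_add hA0, ← Finset.mul_sum, packVol]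
        simp

lemma sum_powerset_pow_packVol_le (hd : 1 ≤ d) {ρ : ℝ} (hρ0 : 0 ≤ ρ) (hρ1 : ρ < 1) (m M N : ℕ) :
    ∑ P ∈ (cube (0 : Site d) N ×ˢ Finset.Icc m M).powerset, ρ ^ packVol P ≤
      Real.exp (ρ ^ m / (1 - ρ) * (N : ℝ) ^ d) := by
  calc ∑ P ∈ (cube (0 : Site d) N ×ˢ Finset.Icc m M).powerset, ρ ^ packVol P
      = ∏ p ∈ cube (0 : Site d) N ×ˢ Finset.Icc m M, (1 + ρ ^ (p.2 ^ d)) := by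
        simp only [Finset.prod_one_add, packVol, Finset.prod_pow_eq_pow_sum]
    _ ≤ ∏ p ∈ cube (0 : Site d) N ×ˢ Finset.Icc m M, Real.exp (ρ ^ (p.2 ^ d)) :=
        Finset.prod_le_prod (fun p _ => by positivity) fun p _ => by
          rw [add_comm]; exact Real.add_one_le_exp _
    _ = Real.exp ((∑ n ∈ Finset.Icc m M, ρ ^ (n ^ d)) * (N : ℝ) ^ d) := by
        rw [← Real.exp_sum, Finset.sum_product]
        simp only [Finset.sum_const, card_cube, nsmul_eq_mul, Nat.cast_pow]
        rw [mul_comm]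
    _ ≤ _ := by
        gcongr
        calc ∑ n ∈ Finset.Icc m M, ρ ^ (n ^ d) ≤ ∑ n ∈ Finset.Ico m (M + 1), ρ ^ n :=
              Finset.sum_le_sum fun n _ =>
                pow_le_pow_of_le_one hρ0 hρ1.le (Nat.le_self_pow (by omega) n)
          _ ≤ _ := geom_sum_Ico_le_of_lt_one hρ0 hρ1

-- Weight every packing by its volume: the generating function of packings is an almost trivial
-- product when all scales are large.
lemma exists_card_packings_le (hA : 2 ≤ A) (hd : 1 ≤ d) {ε : ℝ} (hε : 0 < ε) :
    ∃ m : ℕ, 1 ≤ m ∧ ∀ (M N : ℕ) (Q : Finset (Finset (Site d × ℕ))),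
      (∀ P ∈ Q, IsPacking (fun _ => Set.univ) m M N P) →
      (Q.card : ℝ) ≤ (A : ℝ) ^ (2 * ε * (N : ℝ) ^ d) := by
  have hA1 : (1 : ℝ) < A := by exact_mod_cast hA
  have hA0 : (0 : ℝ) < A := by positivity
  have hlog : 0 < Real.log A := Real.log_pos hA1
  set ρ : ℝ := (A : ℝ) ^ (-ε) with hρ
  have hρ0 : 0 < ρ := Real.rpow_pos_of_pos hA0 _
  have hρ1 : ρ < 1 := Real.rpow_lt_one_of_one_lt_of_neg hA1 (by linarith)
  have hlim : Tendsto (fun m : ℕ => ρ ^ m / (1 - ρ)) atTop (𝓝 (0 / (1 - ρ))) :=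
    (tendsto_pow_atTop_nhds_zero_of_lt_one hρ0.le hρ1).div_const _
  rw [zero_div] at hlim
  obtain ⟨m, hm, hm1⟩ := ((hlim.eventually_le_const (show 0 < ε * Real.log A by positivity)).and
    (eventually_ge_atTop 1)).exists
  refine ⟨m, hm1, fun M N Q hQ => ?_⟩
  have hsub : Q ⊆ (cube 0 N ×ˢ Finset.Icc m M).powerset := fun P hP =>
    Finset.mem_powerset.2 ((hQ P hP).subset_product hm1)
  have hmain : (Q.card : ℝ) * (A : ℝ) ^ (-(ε * (N : ℝ) ^ d)) ≤ (A : ℝ) ^ (ε * (N : ℝ) ^ d) := by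
    calc (Q.card : ℝ) * (A : ℝ) ^ (-(ε * (N : ℝ) ^ d)) = ∑ _ ∈ Q, ρ ^ (N ^ d) := by
          rw [Finset.sum_const, nsmul_eq_mul, hρ, ← Real.rpow_mul_natCast hA0.le, Nat.cast_pow,
            neg_mul]
      _ ≤ ∑ P ∈ Q, ρ ^ packVol P := Finset.sum_le_sum fun P hP =>
          pow_le_pow_of_le_one hρ0.le hρ1.le (hQ P hP).packVol_le
      _ ≤ ∑ P ∈ (cube 0 N ×ˢ Finset.Icc m M).powerset, ρ ^ packVol P :=
          Finset.sum_le_sum_of_subset_of_nonneg hsub fun P _ _ => by positivity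
      _ ≤ Real.exp (ρ ^ m / (1 - ρ) * (N : ℝ) ^ d) :=
          sum_powerset_pow_packVol_le hd hρ0.le hρ1 m M N
      _ ≤ Real.exp (ε * Real.log A * (N : ℝ) ^ d) := by gcongr
      _ = _ := by rw [Real.rpow_def_of_pos hA0]; congr 1; ring
  rw [Real.rpow_neg hA0.le, ← div_eq_mul_inv, div_le_iff₀ (Real.rpow_pos_of_pos hA0 _),
    ← Real.rpow_add hA0] at hmain
  exact hmain.trans_eq (by congr 1; ring)

theorem exists_ncard_image_packable_le (hA : 2 ≤ A) (hd : 1 ≤ d) {c ε : ℝ} (hc : 0 ≤ c)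
    (hε : 0 < ε) : ∃ m : ℕ, ∀ S : ∀ n, Set (Word A d n),
      (∀ n, ((S n).ncard : ℝ) ≤ (A : ℝ) ^ (c * (n : ℝ) ^ d)) → ∀ M N : ℕ,
      (((wordAt · N 0) '' packable d (fun n => {x : Config A d | wordAt x n 0 ∈ S n}) m M N
        ((1 - ε) * (N : ℝ) ^ d)).ncard : ℝ) ≤ (A : ℝ) ^ ((c + 3 * ε) * (N : ℝ) ^ d) := by
  classical
  have hA1 : (1 : ℝ) < A := by exact_mod_cast hA
  have hA0 : (0 : ℝ) < A := by positivity
  obtain ⟨m, hm1, hm⟩ := exists_card_packings_le hA hd hε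
  refine ⟨m, fun S hS M N => ?_⟩
  let Q : Finset (Finset (Site d × ℕ)) := (cube 0 N ×ˢ Finset.Icc m M).powerset.filter
    fun P => IsPacking (fun _ => Set.univ) m M N P ∧ (1 - ε) * (N : ℝ) ^ d ≤ packVol P
  have hQ : ∀ P ∈ Q, IsPacking (fun _ => Set.univ) m M N P ∧ (1 - ε) * (N : ℝ) ^ d ≤ packVol P :=
    fun P hP => (Finset.mem_filter.1 hP).2
  let compatible : Finset (Site d × ℕ) → Set (Word A d N) := fun P =>
    (wordAt · N 0) '' {x | ∀ p ∈ P, wordAt x p.2 p.1 ∈ S p.2}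
  have hsub : (wordAt · N 0) '' packable d (fun n => {x : Config A d | wordAt x n 0 ∈ S n}) m M N
      ((1 - ε) * (N : ℝ) ^ d) ⊆ ⋃ P ∈ Q, compatible P := by
    rintro _ ⟨x, ⟨P, hP, hvol⟩, rfl⟩
    refine Set.mem_biUnion (x := P) (Finset.mem_coe.2 (Finset.mem_filter.2 ⟨?_, ?_, hvol⟩))
      ⟨x, fun p hp => ?_, rfl⟩
    · exact Finset.mem_powerset.2 (hP.subset_product hm1)
    · exact { hP with good := fun _ _ => trivial }
    · simpa [wordAt_vadd] using hP.good p hp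
  calc _ ≤ ((⋃ P ∈ Q, compatible P).ncard : ℝ) := by
        exact_mod_cast Set.ncard_le_ncard hsub (Set.toFinite _)
    _ ≤ ∑ P ∈ Q, ((compatible P).ncard : ℝ) := by
        exact_mod_cast Finset.set_ncard_biUnion_le Q _
    _ ≤ ∑ _ ∈ Q, (A : ℝ) ^ ((c + ε) * (N : ℝ) ^ d) := by
        refine Finset.sum_le_sum fun P hP => ((hQ P hP).1.ncard_image_wordAt_le hA S hS).trans
          (Real.rpow_le_rpow_of_exponent_le hA1.le ?_)
        have hvol : (packVol P : ℝ) ≤ (N : ℝ) ^ d := by exact_mod_cast (hQ P hP).1.packVol_le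
        linarith [mul_le_mul_of_nonneg_left hvol hc, (hQ P hP).2]
    _ ≤ (A : ℝ) ^ (2 * ε * (N : ℝ) ^ d) * (A : ℝ) ^ ((c + ε) * (N : ℝ) ^ d) := by
        rw [Finset.sum_const, nsmul_eq_mul]
        exact mul_le_mul_of_nonneg_right (hm M N Q fun P hP => (hQ P hP).1) (by positivity)
    _ = _ := by rw [← Real.rpow_add hA0]; congr 1; ring

end PackedWords

/-! ### The lower half of the Shannon–McMillan–Breiman theorem -/

section LikelyWords

variable {μ : Measure (Config A d)}

lemma wordDist_eq_measureReal_map (μ : Measure (Config A d)) (n : ℕ) (w : Word A d n) :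
    wordDist μ n w = (μ.map (wordAt · n 0)).real {w} :=
  (map_measureReal_apply (measurable_wordAt n 0) (measurableSet_singleton w)).symm

lemma wordDist_nonneg (μ : Measure (Config A d)) (n : ℕ) (w : Word A d n) :
    0 ≤ wordDist μ n w := ENNReal.toReal_nonneg

lemma sum_indicator_wordDist [IsFiniteMeasure μ] (n : ℕ) (S : Set (Word A d n)) :
    ∑ w, S.indicator (wordDist μ n) w = μ.real {x | wordAt x n 0 ∈ S} := by
  classical
  have hmeas : MeasurableSet S := S.toFinite.measurableSet
  calc ∑ w, S.indicator (wordDist μ n) w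
      = ∑ w ∈ S.toFinset, (μ.map (wordAt · n 0)).real {w} := by
        simp only [Set.indicator_apply, wordDist_eq_measureReal_map, ← Finset.sum_filter]
        exact Finset.sum_congr (by ext; simp) fun _ _ => rfl
    _ = _ := by
        rw [sum_measureReal_singleton, Set.coe_toFinset,
          map_measureReal_apply (measurable_wordAt n 0) hmeas]
        rfl

lemma sum_wordDist [IsProbabilityMeasure μ] (n : ℕ) : ∑ w, wordDist μ n w = 1 := by
  simpa using sum_indicator_wordDist (μ := μ) n Set.univ

lemma wordDist_le_wordDist_vadd [IsFiniteMeasure μ] [VAddInvariantMeasure (Site d) (Config A d) μ]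
    (n : ℕ) (r : Site d) (x : Config A d) :
    wordDist μ (n + ∑ j, r j) (wordAt x (n + ∑ j, r j) 0) ≤ wordDist μ n (wordAt (r +ᵥ x) n 0) := by
  have hmeas : MeasurableSet {y : Config A d | wordAt y n 0 = wordAt (r +ᵥ x) n 0} :=
    measurable_wordAt n 0 (measurableSet_singleton _)
  have hshift : μ.real ((r +ᵥ ·) ⁻¹' {y | wordAt y n 0 = wordAt (r +ᵥ x) n 0}) =
      wordDist μ n (wordAt (r +ᵥ x) n 0) :=
    (measurePreserving_vadd r μ).measureReal_preimage hmeas.nullMeasurableSet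
  refine (measureReal_mono fun y hy => ?_).trans_eq hshift
  simp only [Set.mem_preimage, Set.mem_ofPred_eq, wordAt_vadd] at hy ⊢
  funext i
  have hlt : ∀ j, r j + (i j : ℕ) < n + ∑ j, r j := fun j => by
    have := Finset.single_le_sum (fun i _ => Nat.zero_le (r i)) (Finset.mem_univ j)
    have := (i j).2
    omega
  simpa [wordAt] using congrFun hy fun j => ⟨r j + i j, hlt j⟩

/-- The words of `μ^n`-probability at least `A^{-c n^d}`. -/
def likelyWords (μ : Measure (Config A d)) (c : ℝ) (n : ℕ) : Set (Word A d n) :=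
  {w | (A : ℝ) ^ (-(c * (n : ℝ) ^ d)) ≤ wordDist μ n w}

lemma measurableSet_wordAt_mem (n : ℕ) (S : Set (Word A d n)) :
    MeasurableSet {x : Config A d | wordAt x n 0 ∈ S} :=
  measurable_wordAt n 0 S.toFinite.measurableSet

lemma ncard_likelyWords_le (hA : 2 ≤ A) [IsProbabilityMeasure μ] (c : ℝ) (n : ℕ) :
    ((likelyWords μ c n).ncard : ℝ) ≤ (A : ℝ) ^ (c * (n : ℝ) ^ d) := by
  have hA0 : (0 : ℝ) < A := by positivity
  have hsum : ∑ w, (likelyWords μ c n).indicator (fun _ => (A : ℝ) ^ (-(c * (n : ℝ) ^ d))) w ≤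
      ∑ w, wordDist μ n w :=
    Finset.sum_le_sum fun w _ =>
      Set.indicator_le' (fun _ hw => hw) (fun w _ => wordDist_nonneg μ n w) w
  rwa [sum_indicator_const, sum_wordDist, Real.rpow_neg hA0.le, ← div_eq_mul_inv,
    div_le_iff₀ (Real.rpow_pos_of_pos hA0 _), one_mul] at hsum

lemma likelyWords_eq_empty [IsProbabilityMeasure μ] (hA : 2 ≤ A) {c : ℝ} (hc : c < 0) {n : ℕ}
    (hn : 1 ≤ n) : likelyWords μ c n = ∅ := by
  have hlt : (A : ℝ) ^ (c * (n : ℝ) ^ d) < 1 :=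
    Real.rpow_lt_one_of_one_lt_of_neg (by exact_mod_cast hA)
      (mul_neg_of_neg_of_pos hc (by positivity))
  rw [← Set.ncard_eq_zero, ← Nat.lt_one_iff]
  exact_mod_cast (ncard_likelyWords_le hA c n).trans_lt hlt

lemma vadd_mem_likelyWords_of_frequently (hA : 2 ≤ A) [IsFiniteMeasure μ]
    [VAddInvariantMeasure (Site d) (Config A d) μ] {a b : ℝ} (hb : 0 < b) (hab : a < b)
    {r : Site d} {x : Config A d} (h : ∃ᶠ n in atTop, wordAt x n 0 ∈ likelyWords μ a n) :
    ∃ᶠ n in atTop, wordAt (r +ᵥ x) n 0 ∈ likelyWords μ b n := by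
  have hA1 : (1 : ℝ) ≤ A := by exact_mod_cast one_le_two.trans hA
  set R := ∑ j, r j
  have hη : 0 < 1 - a / b := sub_pos.2 ((div_lt_one hb).2 hab)
  have hev := (eventually_sub_pow_ge d R hη).and (eventually_ge_atTop R)
  refine (tendsto_sub_atTop_nat R).frequently ((h.and_eventually hev).mono ?_)
  rintro N ⟨hN, hpow, hRN⟩
  obtain ⟨n, rfl⟩ := Nat.exists_eq_add_of_le' hRN
  rw [Nat.add_sub_cancel] at hpow ⊢
  refine le_trans ?_ (hN.trans (wordDist_le_wordDist_vadd n r x))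
  refine Real.rpow_le_rpow_of_exponent_le hA1 (neg_le_neg ?_)
  calc a * ((n + R : ℕ) : ℝ) ^ d = b * ((1 - (1 - a / b)) * ((n + R : ℕ) : ℝ) ^ d) := by
        field_simp; ring
    _ ≤ b * (n : ℝ) ^ d := by gcongr

end LikelyWords

section EntropyRate

variable {μ : Measure (Config A d)} [IsProbabilityMeasure μ]

lemma logb_card_word (hA : 2 ≤ A) (n : ℕ) :
    Real.logb A (Fintype.card (Word A d n)) = (n : ℝ) ^ d := by
  simp only [Fintype.card_fun, Fintype.card_fin, Nat.cast_pow]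
  rw [Real.logb_pow, Real.logb_self_eq_one (by exact_mod_cast hA), mul_one, Nat.cast_pow]

lemma tendsto_natCast_pow_atTop (hd : 1 ≤ d) : Tendsto (fun n : ℕ => (n : ℝ) ^ d) atTop atTop :=
  (tendsto_pow_atTop (by omega)).comp tendsto_natCast_atTop_atTop

lemma HasEntropyRate.le_of_frequently_mem (hA : 2 ≤ A) (hd : 1 ≤ d)
    [VAddInvariantMeasure (Site d) (Config A d) μ] {h : ℝ} (hrate : HasEntropyRate μ h) {c : ℝ}
    (hc : 0 ≤ c) (S : ∀ n, Set (Word A d n))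
    (hS : ∀ n, ((S n).ncard : ℝ) ≤ (A : ℝ) ^ (c * (n : ℝ) ^ d))
    (hio : ∀ᵐ x ∂μ, ∃ᶠ n in atTop, wordAt x n 0 ∈ S n) : h ≤ c := by
  have hA1 : (1 : ℝ) < A := by exact_mod_cast hA
  refine le_of_forall_pos_le_add fun ε hε => ?_
  obtain ⟨δ, rfl⟩ : ∃ δ, ε = 4 * δ := ⟨ε / 4, by ring⟩
  have hδ : 0 < δ := by linarith
  obtain ⟨m, hm⟩ := exists_ncard_image_packable_le (A := A) (d := d) hA hd hc hδ
  obtain ⟨M, hM⟩ := packingProperty_zero (d := d) (μ := μ)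
    (fun n => measurableSet_wordAt_mem n (S n)) hio δ hδ m
  have hent : ∀ᶠ N : ℕ in atTop, entH A (wordDist μ N) / (N : ℝ) ^ d ≤
      c + 4 * δ + 1 / (N : ℝ) ^ d := by
    filter_upwards [hM, eventually_ge_atTop 1] with N hN hN1
    set Y := packable d (fun n => {x : Config A d | wordAt x n 0 ∈ S n}) m M N
      ((1 - δ) * (N : ℝ) ^ d)
    have hsub : {x | wordAt x N 0 ∈ ((wordAt · N 0) '' Y)ᶜ} ⊆ Yᶜ := fun x hx hxY => hx ⟨x, hxY, rfl⟩
    have hrare : μ.real {x | wordAt x N 0 ∈ ((wordAt · N 0) '' Y)ᶜ} ≤ δ := by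
      rw [sub_zero] at hN
      exact (measureReal_mono hsub).trans hN
    have hle := entH_le_of_concentrated hA (wordDist μ N) (wordDist_nonneg μ N) (sum_wordDist N)
      ((wordAt · N 0) '' Y) (Real.one_le_rpow hA1.le (by positivity)) (hm S hS M N)
    rw [Real.logb_rpow (by positivity) hA1.ne', logb_card_word hA, sum_indicator_wordDist] at hle
    have hNpos : (0 : ℝ) < (N : ℝ) ^ d := by positivity
    rw [div_le_iff₀ hNpos, add_mul, one_div_mul_cancel hNpos.ne']
    linarith [mul_le_mul_of_nonneg_right hrare hNpos.le]
  have hlim : Tendsto (fun N : ℕ => c + 4 * δ + 1 / (N : ℝ) ^ d) atTop (𝓝 (c + 4 * δ + 0)) :=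
    tendsto_const_nhds.add ((tendsto_natCast_pow_atTop hd).const_div_atTop 1)
  rw [add_zero] at hlim
  exact le_of_tendsto_of_tendsto hrate hlim hent

theorem HasEntropyRate.eventually_notMem_likelyWords (hA : 2 ≤ A) (hd : 1 ≤ d)
    [ErgodicVAdd (Site d) (Config A d) μ] {h : ℝ} (hrate : HasEntropyRate μ h) {c : ℝ}
    (hc : c < h) : ∀ᵐ x ∂μ, ∀ᶠ n in atTop, wordAt x n 0 ∉ likelyWords μ c n := by
  rcases lt_or_ge c 0 with hc0 | hc0
  · refine .of_forall fun x => (eventually_ge_atTop 1).mono fun n hn => ?_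
    simp only [likelyWords_eq_empty hA hc0 hn, Set.mem_empty_iff_false, not_false_eq_true]
  obtain ⟨b, hcb, hbh⟩ := exists_between hc
  have hb : 0 < b := hc0.trans_lt hcb
  let L : ℝ → Set (Config A d) := fun a =>
    limsup (fun n => {x | wordAt x n 0 ∈ likelyWords μ a n}) atTop
  have hL : ∀ a x, x ∈ L a ↔ ∃ᶠ n in atTop, wordAt x n 0 ∈ likelyWords μ a n := fun a x =>
    mem_limsup_iff_frequently_mem
  have hvadd : ∀ r : Site d, L c ⊆ (r +ᵥ ·) ⁻¹' L b := fun r x hx =>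
    (hL b _).2 (vadd_mem_likelyWords_of_frequently hA hb hcb ((hL c x).1 hx))
  rcases ae_notMem_or_ae_mem (μ := μ)
    (.measurableSet_limsup fun n => measurableSet_wordAt_mem n (likelyWords μ b n)) hvadd
    with hrare | hfreq
  · exact hrare.mono fun x hx => not_frequently.1 (mt (hL c x).2 hx)
  · exact absurd (hrate.le_of_frequently_mem hA hd hb.le (likelyWords μ b)
      (ncard_likelyWords_le hA b) (hfreq.mono fun x => (hL b x).1)) hbh.not_ge

end EntropyRate

/-! ### Counting words of small empirical entropy -/

section Freq

variable {ι W : Type*} [Fintype ι]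

/-- The frequencies of the letters of a finite family `w`, i.e. its type in the sense of the method
of types. -/
noncomputable def freq (w : ι → W) (v : W) : ℝ := ({r | w r = v}.ncard : ℝ) / Fintype.card ι

lemma freq_nonneg (w : ι → W) (v : W) : 0 ≤ freq w v := by
  rw [freq]
  positivity

lemma freq_apply_pos (w : ι → W) (r : ι) : 0 < freq w (w r) := by
  have : Nonempty ι := ⟨r⟩
  have : 0 < {r' | w r' = w r}.ncard := (Set.ncard_pos (Set.toFinite _)).2 ⟨r, rfl⟩
  rw [freq]
  positivity

lemma ncard_setOf_apply_eq [DecidableEq W] (w : ι → W) (v : W) :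
    {r | w r = v}.ncard = (Finset.univ.filter fun r => w r = v).card := by
  rw [← Set.ncard_coe_finset]
  simp

variable [Fintype W]

lemma sum_freq_mul (w : ι → W) (f : W → ℝ) :
    ∑ v, freq w v * f v = (∑ r, f (w r)) / Fintype.card ι := by
  classical
  rw [← Finset.sum_fiberwise' Finset.univ w f, Finset.sum_div]
  refine Finset.sum_congr rfl fun v _ => ?_
  rw [Finset.sum_const, nsmul_eq_mul, freq, ncard_setOf_apply_eq]
  ring

lemma sum_freq [Nonempty ι] (w : ι → W) : ∑ v, freq w v = 1 := by
  simpa using sum_freq_mul w fun _ => 1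

lemma prod_freq_apply [Nonempty ι] (hA : 2 ≤ A) (w : ι → W) :
    ∏ r, freq w (w r) = (A : ℝ) ^ (-(Fintype.card ι * entH A (freq w))) := by
  have hA1 : (1 : ℝ) < A := by exact_mod_cast hA
  have hentropy : -(Fintype.card ι * entH A (freq w)) = ∑ r, Real.logb A (freq w (w r)) := by
    rw [entH, sum_freq_mul w fun v => Real.logb A (freq w v)]
    field_simp
  rw [hentropy, Real.rpow_sum_of_pos (by positivity)]
  exact Finset.prod_congr rfl fun r _ =>
    (Real.rpow_logb (by positivity) hA1.ne' (freq_apply_pos w r)).symm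

lemma card_piAntidiag_univ_le [DecidableEq W] {s : ℝ} (hs0 : 0 < s) (hs1 : s < 1) (K : ℕ) :
    ((Finset.piAntidiag (Finset.univ : Finset W) K).card : ℝ) ≤
      s⁻¹ ^ K * (1 - s)⁻¹ ^ Fintype.card W := by
  have hsub : Finset.piAntidiag (Finset.univ : Finset W) K ⊆
      Fintype.piFinset fun _ => Finset.range (K + 1) := fun t ht =>
    Fintype.mem_piFinset.2 fun v => Finset.mem_range_succ_iff.2 <| by
      rw [← (Finset.mem_piAntidiag.1 ht).1]
      exact Finset.single_le_sum (fun _ _ => Nat.zero_le _) (Finset.mem_univ v)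
  rw [inv_pow, inv_mul_eq_div, le_div_iff₀ (by positivity)]
  calc ((Finset.piAntidiag (Finset.univ : Finset W) K).card : ℝ) * s ^ K
      = ∑ t ∈ Finset.piAntidiag (Finset.univ : Finset W) K, ∏ v, s ^ t v := by
        rw [← nsmul_eq_mul, ← Finset.sum_const]
        refine Finset.sum_congr rfl fun t ht => ?_
        rw [Finset.prod_pow_eq_pow_sum, (Finset.mem_piAntidiag.1 ht).1]
    _ ≤ ∑ t ∈ Fintype.piFinset fun _ : W => Finset.range (K + 1), ∏ v, s ^ t v :=
        Finset.sum_le_sum_of_subset_of_nonneg hsub fun t _ _ => by positivity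
    _ = ∏ _v : W, ∑ j ∈ Finset.range (K + 1), s ^ j :=
        (Finset.prod_univ_sum _ fun _ j => s ^ j).symm
    _ ≤ ∏ _v : W, (1 - s)⁻¹ := Finset.prod_le_prod (fun v _ => by positivity) fun v _ => by
        rw [← tsum_geometric_of_lt_one hs0.le hs1]
        exact (summable_geometric_of_lt_one hs0.le hs1).sum_le_tsum _ fun j _ => by positivity
    _ = _ := by rw [Finset.prod_const, Finset.card_univ]

lemma ncard_range_freq_le {s : ℝ} (hs0 : 0 < s) (hs1 : s < 1) :
    ((Set.range (freq : (ι → W) → W → ℝ)).ncard : ℝ) ≤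
      s⁻¹ ^ Fintype.card ι * (1 - s)⁻¹ ^ Fintype.card W := by
  classical
  let normalize : (W → ℕ) → W → ℝ := fun t v => t v / Fintype.card ι
  have hsub : Set.range (freq : (ι → W) → W → ℝ) ⊆
      normalize '' Finset.piAntidiag (Finset.univ : Finset W) (Fintype.card ι) := by
    rintro _ ⟨w, rfl⟩
    refine ⟨fun v => {r | w r = v}.ncard, Finset.mem_coe.2 (Finset.mem_piAntidiag.2 ⟨?_, ?_⟩), rfl⟩
    · simp only [ncard_setOf_apply_eq]
      exact (Finset.card_eq_sum_card_fiberwise fun _ _ => Finset.mem_coe.2 (Finset.mem_univ _)).symm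
    · exact fun _ _ => Finset.mem_univ _
  refine le_trans ?_ (card_piAntidiag_univ_le hs0 hs1 (Fintype.card ι))
  rw [← Set.ncard_coe_finset]
  exact_mod_cast (Set.ncard_le_ncard hsub (Set.toFinite _)).trans
    (Set.ncard_image_le (Set.toFinite _))

-- Under the product measure of its own frequencies, a sequence of small entropy is likely.
lemma ncard_entH_freq_le_mul [Nonempty ι] (hA : 2 ≤ A) (E : ℝ) :
    ({w : ι → W | entH A (freq w) ≤ E}.ncard : ℝ) * (A : ℝ) ^ (-(Fintype.card ι * E)) ≤
      (Set.range (freq : (ι → W) → W → ℝ)).ncard := by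
  classical
  have hA1 : (1 : ℝ) ≤ A := by exact_mod_cast one_le_two.trans hA
  let T : Finset (W → ℝ) := Finset.univ.image (freq : (ι → W) → W → ℝ)
  have hT0 : ∀ p ∈ T, ∀ w : ι → W, 0 ≤ ∏ r, p (w r) := fun p hp w => by
    obtain ⟨w', -, rfl⟩ := Finset.mem_image.1 hp
    exact Finset.prod_nonneg fun r _ => freq_nonneg _ _
  have hT1 : ∀ p ∈ T, ∑ w : ι → W, ∏ r, p (w r) = 1 := fun p hp => by
    obtain ⟨w, -, rfl⟩ := Finset.mem_image.1 hp
    rw [← Fintype.piFinset_univ, Finset.sum_prod_piFinset Finset.univ fun _ v => freq w v]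
    exact Finset.prod_eq_one fun _ _ => sum_freq w
  rw [← sum_indicator_const]
  calc ∑ w : ι → W, {w : ι → W | entH A (freq w) ≤ E}.indicator
          (fun _ => (A : ℝ) ^ (-(Fintype.card ι * E))) w
      ≤ ∑ w : ι → W, ∑ p ∈ T, ∏ r, p (w r) := Finset.sum_le_sum fun w _ =>
        Set.indicator_apply_le' (fun hw => ?_) fun _ => Finset.sum_nonneg fun p hp => hT0 p hp w
    _ = ∑ p ∈ T, ∑ w : ι → W, ∏ r, p (w r) := Finset.sum_comm
    _ = T.card := by rw [Finset.sum_congr rfl hT1, Finset.sum_const, nsmul_one]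
    _ = _ := by rw [← Set.ncard_coe_finset, Finset.coe_image, Finset.coe_univ, Set.image_univ]
  calc (A : ℝ) ^ (-(Fintype.card ι * E)) ≤ (A : ℝ) ^ (-(Fintype.card ι * entH A (freq w))) :=
        Real.rpow_le_rpow_of_exponent_le hA1 (neg_le_neg (by gcongr; exact hw))
    _ = ∏ r, freq w (w r) := (prod_freq_apply hA w).symm
    _ ≤ ∑ p ∈ T, ∏ r, p (w r) := Finset.single_le_sum (fun p hp => hT0 p hp w)
        (Finset.mem_image_of_mem freq (Finset.mem_univ w))

lemma ncard_entH_freq_le [Nonempty ι] (hA : 2 ≤ A) (E : ℝ) {s : ℝ} (hs0 : 0 < s) (hs1 : s < 1) :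
    ({w : ι → W | entH A (freq w) ≤ E}.ncard : ℝ) ≤
      (s⁻¹ ^ Fintype.card ι * (1 - s)⁻¹ ^ Fintype.card W) * (A : ℝ) ^ (Fintype.card ι * E) := by
  have hA0 : (0 : ℝ) < A := by positivity
  rw [← div_le_iff₀ (Real.rpow_pos_of_pos hA0 _), div_eq_mul_inv, ← Real.rpow_neg hA0.le]
  exact (ncard_entH_freq_le_mul hA E).trans (ncard_range_freq_le hs0 hs1)

end Freq

section EmpDist

lemma empDist_eq_freq (x : Config A d) (k n : ℕ) :
    empDist x k n = freq fun r : Fin d → Fin (n / k) => wordAt x k fun j => k * (r j : ℕ) := by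
  funext w
  simp [empDist, freq]

lemma wordAt_finProdFinEquiv (x : Config A d) {b k : ℕ} (r : Fin d → Fin b) (i : Fin d → Fin k) :
    wordAt x (b * k) 0 (fun j => finProdFinEquiv (r j, i j)) =
      wordAt x k (fun j => k * (r j : ℕ)) i := by
  simp [wordAt, add_comm]

lemma ncard_image_wordAt_entH_le (hA : 2 ≤ A) {k n : ℕ} (hn : 1 ≤ n / k) (E : ℝ) {s : ℝ}
    (hs0 : 0 < s) (hs1 : s < 1) :
    (((wordAt · (n / k * k) 0) '' {x : Config A d | entH A (empDist x k n) ≤ E}).ncard : ℝ) ≤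
      (s⁻¹ ^ ((n / k) ^ d) * (1 - s)⁻¹ ^ (A ^ (k ^ d))) *
        (A : ℝ) ^ (((n / k : ℕ) : ℝ) ^ d * E) := by
  have : NeZero (n / k) := ⟨by omega⟩
  have hfreq := ncard_entH_freq_le (ι := Fin d → Fin (n / k)) (W := Word A d k) hA E hs0 hs1
  simp only [Fintype.card_fun, Fintype.card_fin, Nat.cast_pow] at hfreq
  refine le_trans (Nat.cast_le.2 ?_) hfreq
  let blocks : Word A d (n / k * k) → (Fin d → Fin (n / k)) → Word A d k :=
    fun w r i => w fun j => finProdFinEquiv (r j, i j)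
  have hinj : Function.Injective blocks := fun w v h => funext fun t => by
    have hblock := congrFun (congrFun h fun j => (finProdFinEquiv.symm (t j)).1)
      fun j => (finProdFinEquiv.symm (t j)).2
    simpa only [blocks, Prod.mk.eta, Equiv.apply_symm_apply] using hblock
  refine Set.ncard_le_ncard_of_injOn blocks ?_ hinj.injOn (Set.toFinite _)
  rintro _ ⟨x, hx, rfl⟩
  have hblocks : blocks (wordAt x (n / k * k) 0) = fun r => wordAt x k fun j => k * (r j : ℕ) :=
    funext fun r => funext fun i => wordAt_finProdFinEquiv x r i
  simpa only [Set.mem_ofPred_eq, hblocks, ← empDist_eq_freq] using hx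

lemma exists_ncard_image_wordAt_entH_le (hA : 2 ≤ A) (d : ℕ) {a : ℝ} (ha : 0 < a) :
    ∃ σ : ℝ, ∀ (k n : ℕ) (E : ℝ), 1 ≤ n / k →
      (((wordAt · (n / k * k) 0) '' {x : Config A d | entH A (empDist x k n) ≤ E}).ncard : ℝ) ≤
        (A : ℝ) ^ (σ * ((n / k : ℕ) : ℝ) ^ d + a * (A : ℝ) ^ (k ^ d) +
          ((n / k : ℕ) : ℝ) ^ d * E) := by
  have hA1 : (1 : ℝ) < A := by exact_mod_cast hA
  have hA0 : (0 : ℝ) < A := by positivity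
  set s : ℝ := 1 - (A : ℝ) ^ (-a) with hs
  have hs1 : s < 1 := sub_lt_self 1 (Real.rpow_pos_of_pos hA0 _)
  have hs0 : 0 < s := sub_pos.2 (Real.rpow_lt_one_of_one_lt_of_neg hA1 (by linarith))
  have hone_sub : (1 - s)⁻¹ = (A : ℝ) ^ a := by
    rw [hs, sub_sub_cancel, Real.rpow_neg hA0.le, inv_inv]
  refine ⟨Real.logb A s⁻¹, fun k n E hn =>
    (ncard_image_wordAt_entH_le hA hn E hs0 hs1).trans_eq ?_⟩
  have htypes : s⁻¹ ^ (n / k) ^ d = (A : ℝ) ^ (Real.logb A s⁻¹ * ((n / k : ℕ) : ℝ) ^ d) := by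
    rw [Real.rpow_mul hA0.le, Real.rpow_logb hA0 hA1.ne' (inv_pos.2 hs0)]
    exact_mod_cast rfl
  have hblocks : (1 - s)⁻¹ ^ A ^ k ^ d = (A : ℝ) ^ (a * (A : ℝ) ^ (k ^ d)) := by
    rw [hone_sub, Real.rpow_mul hA0.le]
    exact_mod_cast (Real.rpow_natCast _ _).symm
  rw [htypes, hblocks, Real.rpow_add hA0, Real.rpow_add hA0]

end EmpDist

/-! ### The lower bound -/

section BlockLength

variable {k : ℕ → ℕ}

lemma tendsto_div_one_of_le_add {a e : ℕ → ℕ} (hle : ∀ᶠ n in atTop, a n ≤ n)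
    (hadd : ∀ᶠ n in atTop, n ≤ a n + e n)
    (he : Tendsto (fun n => (e n : ℝ) / n) atTop (𝓝 0)) :
    Tendsto (fun n => (a n : ℝ) / n) atTop (𝓝 1) := by
  have hlow : Tendsto (fun n : ℕ => 1 - (e n : ℝ) / n) atTop (𝓝 1) := by
    simpa using he.const_sub 1
  refine tendsto_of_tendsto_of_tendsto_of_le_of_le' hlow tendsto_const_nhds ?_ ?_
  · filter_upwards [hadd, eventually_ge_atTop 1] with n hn hn1
    have hn' : (n : ℝ) ≤ a n + e n := by exact_mod_cast hn
    have hn0 : (0 : ℝ) < n := by positivity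
    rw [one_sub_div hn0.ne']
    gcongr
    linarith
  · filter_upwards [hle] with n hn
    exact div_le_one_of_le₀ (by exact_mod_cast hn) (Nat.cast_nonneg n)

lemma tendsto_atTop_of_tendsto_div_one {a : ℕ → ℕ}
    (ha : Tendsto (fun n => (a n : ℝ) / n) atTop (𝓝 1)) : Tendsto a atTop atTop := by
  rw [← tendsto_natCast_atTop_iff (R := ℝ)]
  refine ((tendsto_natCast_atTop_atTop (R := ℝ)).atTop_mul_pos one_pos ha).congr' ?_
  filter_upwards [eventually_ge_atTop 1] with n hn
  exact mul_div_cancel₀ _ (by positivity)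

lemma tendsto_div_mul_self_div (hk : Tendsto k atTop atTop)
    (hkn : Tendsto (fun n => (k n : ℝ) / n) atTop (𝓝 0)) :
    Tendsto (fun n => ((n / k n * k n : ℕ) : ℝ) / n) atTop (𝓝 1) := by
  refine tendsto_div_one_of_le_add (.of_forall fun n => Nat.div_mul_le_self n (k n)) ?_ hkn
  filter_upwards [hk.eventually_ge_atTop 1] with n hn
  exact (Nat.lt_div_mul_add hn).le

lemma eventually_one_le_div (hk : Tendsto k atTop atTop)
    (hkn : Tendsto (fun n => (k n : ℝ) / n) atTop (𝓝 0)) : ∀ᶠ n in atTop, 1 ≤ n / k n := by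
  filter_upwards [(tendsto_atTop_of_tendsto_div_one
    (tendsto_div_mul_self_div hk hkn)).eventually_ge_atTop 1] with n hn
  exact Nat.pos_of_mul_pos_right hn

lemma tendsto_div_zero_of_pow_le_logb (hd : 1 ≤ d)
    (hgrowth : ∀ᶠ n in atTop, (k n : ℝ) ^ d ≤ Real.logb A ((n : ℝ) ^ d)) :
    Tendsto (fun n => (k n : ℝ) / n) atTop (𝓝 0) := by
  have hlog : Tendsto (fun n : ℕ => d / Real.log A * (Real.log n / n)) atTop (𝓝 0) := by
    simpa using ((Real.isLittleO_log_id_atTop.tendsto_div_nhds_zero).comp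
      tendsto_natCast_atTop_atTop).const_mul (d / Real.log A)
  refine squeeze_zero' (.of_forall fun n => by positivity) ?_ hlog
  filter_upwards [hgrowth] with n hn
  rw [Real.logb_pow, Real.logb] at hn
  have hself : (k n : ℝ) ≤ (k n : ℝ) ^ d := by exact_mod_cast Nat.le_self_pow (by omega) _
  calc (k n : ℝ) / n ≤ d * (Real.log n / Real.log A) / n := by gcongr; exact hself.trans hn
    _ = _ := by ring

lemma eventually_exponent_le (hA : 2 ≤ A) (hd : 1 ≤ d) (hk : Tendsto k atTop atTop)
    (hgrowth : ∀ᶠ n in atTop, (k n : ℝ) ^ d ≤ Real.logb A ((n : ℝ) ^ d)) (σ : ℝ) {γ : ℝ}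
    (hγ : 0 < γ) :
    ∀ᶠ n in atTop, σ * ((n / k n : ℕ) : ℝ) ^ d + γ / 4 / 2 ^ d * (A : ℝ) ^ (k n ^ d) ≤
      γ * ((n / k n * k n : ℕ) : ℝ) ^ d - γ / 4 * n := by
  have hA1 : (1 : ℝ) < A := by exact_mod_cast hA
  have hcov := tendsto_div_mul_self_div hk (tendsto_div_zero_of_pow_le_logb hd hgrowth)
  filter_upwards [(((tendsto_natCast_pow_atTop hd).comp hk).const_mul_atTop
    (show 0 < γ / 4 by positivity)).eventually_ge_atTop σ,
    hcov.eventually_const_le (show (1 / 2 : ℝ) < 1 by norm_num), hgrowth,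
    eventually_ge_atTop 1] with n hσ hhalf hlog hn
  rw [Function.comp_apply] at hσ
  set N := n / k n * k n with hN
  have hn0 : (0 : ℝ) < n := by positivity
  have hnN : (n : ℝ) ≤ 2 * N := by rw [le_div_iff₀ hn0] at hhalf; linarith
  have hNd : (N : ℝ) ≤ (N : ℝ) ^ d := by exact_mod_cast Nat.le_self_pow (by omega) N
  have htypes : σ * ((n / k n : ℕ) : ℝ) ^ d ≤ γ / 4 * (N : ℝ) ^ d := by
    calc σ * ((n / k n : ℕ) : ℝ) ^ d
        ≤ γ / 4 * (k n : ℝ) ^ d * ((n / k n : ℕ) : ℝ) ^ d := by gcongr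
      _ = _ := by rw [hN, Nat.cast_mul, mul_pow]; ring
  have hwords : (A : ℝ) ^ (k n ^ d) ≤ (n : ℝ) ^ d := by
    rw [Real.le_logb_iff_rpow_le hA1 (by positivity)] at hlog
    exact_mod_cast hlog
  have hletters : γ / 4 / 2 ^ d * (A : ℝ) ^ (k n ^ d) ≤ γ / 4 * (N : ℝ) ^ d := by
    calc γ / 4 / 2 ^ d * (A : ℝ) ^ (k n ^ d) ≤ γ / 4 / 2 ^ d * (2 * N : ℝ) ^ d := by
          gcongr
          exact hwords.trans (by gcongr)
      _ = _ := by rw [mul_pow]; field_simp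
  have hlinear : γ / 4 * n ≤ γ / 2 * (N : ℝ) ^ d := by
    calc γ / 4 * n ≤ γ / 4 * (2 * (N : ℝ) ^ d) := by gcongr; linarith
      _ = _ := by ring
  linarith

end BlockLength

section LowerBound

lemma ae_eventually_notMem_of_summable_measureReal {Ω : Type*} [MeasurableSpace Ω]
    {μ : Measure Ω} [IsFiniteMeasure μ] {s : ℕ → Set Ω} (hs : Summable fun n => μ.real (s n)) :
    ∀ᵐ x ∂μ, ∀ᶠ n in atTop, x ∉ s n := by
  have hsum := hs.tsum_ofReal_ne_top
  simp only [ofReal_measureReal (measure_ne_top μ _)] at hsum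
  exact ae_eventually_notMem hsum

variable {μ : Measure (Config A d)} [IsProbabilityMeasure μ] {k : ℕ → ℕ}

lemma measureReal_wordAt_mem_sdiff_likelyWords_le (c : ℝ) (n : ℕ) (T : Set (Word A d n)) :
    μ.real {x | wordAt x n 0 ∈ T \ likelyWords μ c n} ≤
      T.ncard * (A : ℝ) ^ (-(c * (n : ℝ) ^ d)) := by
  rw [← sum_indicator_wordDist, ← sum_indicator_const]
  refine Finset.sum_le_sum fun w _ => Set.indicator_apply_le' (fun hw => ?_) fun _ =>
    Set.indicator_nonneg (fun _ _ => by positivity) w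
  rw [Set.indicator_of_mem hw.1]
  exact (not_le.1 hw.2).le

lemma summable_measureReal_entH_le_of_notMem_likelyWords (hA : 2 ≤ A) (hd : 1 ≤ d)
    (hk : Tendsto k atTop atTop)
    (hgrowth : ∀ᶠ n in atTop, (k n : ℝ) ^ d ≤ Real.logb A ((n : ℝ) ^ d)) {c c' : ℝ}
    (hc : c < c') :
    Summable fun n => μ.real {x | entH A (empDist x (k n) n) ≤ c * (k n : ℝ) ^ d ∧
      wordAt x (n / k n * k n) 0 ∉ likelyWords μ c' (n / k n * k n)} := by
  have hA1 : (1 : ℝ) < A := by exact_mod_cast hA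
  have hA0 : (0 : ℝ) < A := by positivity
  have hγ : 0 < c' - c := sub_pos.2 hc
  obtain ⟨σ, hσ⟩ := exists_ncard_image_wordAt_entH_le hA d
    (show 0 < (c' - c) / 4 / 2 ^ d by positivity)
  have hratio : (A : ℝ) ^ (-((c' - c) / 4)) < 1 :=
    Real.rpow_lt_one_of_one_lt_of_neg hA1 (by linarith)
  refine .of_norm_bounded_eventually_nat
    (summable_geometric_of_lt_one (by positivity) hratio) ?_
  filter_upwards [eventually_one_le_div hk (tendsto_div_zero_of_pow_le_logb hd hgrowth),
    eventually_exponent_le hA hd hk hgrowth σ hγ] with n hn hexp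
  set N := n / k n * k n with hN
  set T : Set (Word A d N) :=
    (wordAt · N 0) '' {x | entH A (empDist x (k n) n) ≤ c * (k n : ℝ) ^ d}
  have hNd : ((n / k n : ℕ) : ℝ) ^ d * (c * (k n : ℝ) ^ d) = c * (N : ℝ) ^ d := by
    rw [hN, Nat.cast_mul, mul_pow]
    ring
  have hT : (T.ncard : ℝ) ≤ _ := hσ (k n) n (c * (k n : ℝ) ^ d) hn
  rw [Real.norm_of_nonneg measureReal_nonneg]
  calc μ.real {x | entH A (empDist x (k n) n) ≤ c * (k n : ℝ) ^ d ∧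
        wordAt x N 0 ∉ likelyWords μ c' N}
      ≤ μ.real {x | wordAt x N 0 ∈ T \ likelyWords μ c' N} :=
        measureReal_mono fun x hx => ⟨⟨x, hx.1, rfl⟩, hx.2⟩
    _ ≤ T.ncard * (A : ℝ) ^ (-(c' * (N : ℝ) ^ d)) :=
        measureReal_wordAt_mem_sdiff_likelyWords_le c' N T
    _ ≤ _ := mul_le_mul_of_nonneg_right hT (by positivity)
    _ = _ := (Real.rpow_add hA0 _ _).symm
    _ ≤ (A : ℝ) ^ (-((c' - c) / 4) * (n : ℝ)) := by
        refine Real.rpow_le_rpow_of_exponent_le hA1.le ?_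
        linarith
    _ = _ := by rw [Real.rpow_mul hA0.le, Real.rpow_natCast]

theorem HasEntropyRate.eventually_lt_entH_empDist (hA : 2 ≤ A) (hd : 1 ≤ d)
    [ErgodicVAdd (Site d) (Config A d) μ] {h : ℝ} (hrate : HasEntropyRate μ h)
    (hk : Tendsto k atTop atTop)
    (hgrowth : ∀ᶠ n in atTop, (k n : ℝ) ^ d ≤ Real.logb A ((n : ℝ) ^ d)) {c : ℝ}
    (hc : c < h) :
    ∀ᵐ x ∂μ, ∀ᶠ n in atTop, c * (k n : ℝ) ^ d < entH A (empDist x (k n) n) := by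
  obtain ⟨c', hc', hc'h⟩ := exists_between hc
  have hcov := tendsto_atTop_of_tendsto_div_one
    (tendsto_div_mul_self_div hk (tendsto_div_zero_of_pow_le_logb hd hgrowth))
  filter_upwards [ae_eventually_notMem_of_summable_measureReal
      (summable_measureReal_entH_le_of_notMem_likelyWords hA hd hk hgrowth hc'),
    hrate.eventually_notMem_likelyWords hA hd hc'h] with x hx hunlikely
  filter_upwards [hx, hcov.eventually hunlikely] with n hn hnot
  exact not_le.1 fun hle => hn ⟨hle, hnot⟩

end LowerBound

/-! ### The upper bound -/

section GridCode

variable {m k K : ℕ}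

lemma eq_and_eq_of_mul_add_eq {a b i j : ℕ} (hi : i < m) (hj : j < m)
    (h : m * a + i = m * b + j) : a = b ∧ i = j := by
  have hm : 0 < m := (Nat.zero_le i).trans_lt hi
  obtain ⟨hdiv, hmod⟩ := (Nat.div_mod_unique hm).2 ⟨by rw [add_comm, h], hi⟩
  rw [Nat.mul_add_div hm, Nat.div_eq_of_lt hj, add_zero] at hdiv
  rw [Nat.mul_add_mod, Nat.mod_eq_of_lt hj] at hmod
  exact ⟨hdiv.symm, hmod.symm⟩

lemma mul_add_add_lt_of_mul_succ_le (hK : m * (K + 1) ≤ k) (s : Fin K) (c i : Fin m) :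
    m * (s : ℕ) + c + i < k := by
  have hs : m * ((s : ℕ) + 1) ≤ m * K := Nat.mul_le_mul_left m s.2
  have := c.2
  have := i.2
  rw [mul_add] at hs hK
  omega

/-- The `i`-th site of the cell with index `s` of the grid `m · Λ_K + c + Λ_m`, as a site
of `Λ_k`. -/
def gridSite (hK : m * (K + 1) ≤ k) (c : Fin d → Fin m) (s : Fin d → Fin K)
    (i : Fin d → Fin m) : Fin d → Fin k :=
  fun j => ⟨m * (s j : ℕ) + c j + i j, mul_add_add_lt_of_mul_succ_le hK (s j) (c j) (i j)⟩

lemma gridSite_injective (hK : m * (K + 1) ≤ k) (c : Fin d → Fin m) :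
    Function.Injective fun p : (Σ _ : Fin d → Fin K, Fin d → Fin m) => gridSite hK c p.1 p.2 := by
  rintro ⟨s, i⟩ ⟨s', i'⟩ h
  have hdigits : ∀ j, (s j : ℕ) = s' j ∧ (i j : ℕ) = i' j := fun j => by
    have hj := congrArg Fin.val (congrFun h j)
    simp only [gridSite] at hj
    exact eq_and_eq_of_mul_add_eq (i j).2 (i' j).2 (by omega)
  obtain rfl : s = s' := funext fun j => Fin.ext (hdigits j).1
  obtain rfl : i = i' := funext fun j => Fin.ext (hdigits j).2
  rfl

lemma wordAt_gridSite (x : Config A d) (hK : m * (K + 1) ≤ k) (c : Fin d → Fin m)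
    (s : Fin d → Fin K) (t : Site d) :
    (fun i => wordAt x k t (gridSite hK c s i)) =
      wordAt x m fun j => t j + (m * (s j : ℕ) + c j) := by
  funext i
  simp only [wordAt, gridSite, add_assoc]

/-- The distribution on `k`-words under which the cells of the grid `m · Λ_K + c + Λ_m` are
independent with law `q`, and the symbols off the grid are independent and uniform. -/
noncomputable def gridCode (q : Word A d m → ℝ) (hK : m * (K + 1) ≤ k) (c : Fin d → Fin m)
    (w : Word A d k) : ℝ :=
  (∏ s, q fun i => w (gridSite hK c s i)) * (A : ℝ) ^ (-((k : ℝ) ^ d - (m * K : ℕ) ^ d))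

variable {q : Word A d m → ℝ}

lemma gridCode_pos (hK : m * (K + 1) ≤ k) (c : Fin d → Fin m) (hA : 2 ≤ A)
    (hq : ∀ w, 0 < q w) (w : Word A d k) : 0 < gridCode q hK c w :=
  mul_pos (Finset.prod_pos fun _ _ => hq _) (by positivity)

lemma sum_gridCode (hK : m * (K + 1) ≤ k) (c : Fin d → Fin m) (hA : 2 ≤ A)
    (hq1 : ∑ w, q w = 1) : ∑ w, gridCode q hK c w = 1 := by
  classical
  have hle : (m * K) ^ d ≤ k ^ d := by gcongr; exact (by gcongr; omega : _ ≤ _).trans hK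
  have hcells := sum_prod_comp_sigma (α := Fin A) _ (gridSite_injective hK c) fun _ v => q v
  simp only [hq1, Finset.prod_const_one, one_mul, Fintype.card_fun, Fintype.card_fin,
    Finset.sum_const, Finset.card_univ, smul_eq_mul, ← mul_pow, mul_comm K m] at hcells
  simp only [gridCode]
  rw [← Finset.sum_mul, hcells, ← Real.rpow_natCast, Nat.cast_sub hle,
    ← Real.rpow_add (by positivity)]
  push_cast
  rw [add_neg_cancel, Real.rpow_zero]

lemma neg_logb_gridCode (hK : m * (K + 1) ≤ k) (c : Fin d → Fin m) (hA : 2 ≤ A)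
    (hq : ∀ w, 0 < q w) (w : Word A d k) :
    -Real.logb A (gridCode q hK c w) =
      ∑ s, -Real.logb A (q fun i => w (gridSite hK c s i)) +
        ((k : ℝ) ^ d - (m * K : ℕ) ^ d) := by
  have hA1 : (1 : ℝ) < A := by exact_mod_cast hA
  rw [gridCode, Real.logb_mul (Finset.prod_pos fun s _ => hq _).ne' (by positivity),
    Real.logb_rpow (by positivity) hA1.ne', Real.logb_prod _ _ fun s _ => (hq _).ne',
    Finset.sum_neg_distrib]
  ring

lemma entH_empDist_le_offset (hK : m * (K + 1) ≤ k) (c : Fin d → Fin m) (hA : 2 ≤ A)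
    {n : ℕ} (hn : 1 ≤ n / k) (hq : ∀ w, 0 < q w) (hq1 : ∑ w, q w = 1) (x : Config A d) :
    ((n / k : ℕ) : ℝ) ^ d * entH A (empDist x k n) ≤
      (∑ r : Fin d → Fin (n / k), ∑ s : Fin d → Fin K,
        -Real.logb A (q (wordAt x m fun j => k * (r j : ℕ) + (m * (s j : ℕ) + c j)))) +
      ((n / k : ℕ) : ℝ) ^ d * ((k : ℝ) ^ d - (m * K : ℕ) ^ d) := by
  have : NeZero (n / k) := ⟨by omega⟩
  have hpos : (0 : ℝ) < ((n / k : ℕ) : ℝ) ^ d := by positivity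
  have hgibbs := entH_le_cross_entropy hA _ (gridCode q hK c)
    (freq_nonneg fun r : Fin d → Fin (n / k) => wordAt x k fun j => k * (r j : ℕ)) (sum_freq _)
    (gridCode_pos hK c hA hq) (sum_gridCode hK c hA hq1).le
  rw [sum_freq_mul, ← empDist_eq_freq] at hgibbs
  simp only [neg_logb_gridCode hK c hA hq, wordAt_gridSite, Finset.sum_add_distrib,
    Finset.sum_const, Finset.card_univ, Fintype.card_fun, Fintype.card_fin, nsmul_eq_mul,
    Nat.cast_pow] at hgibbs
  rwa [le_div_iff₀' hpos] at hgibbs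

/-- The origin, in the lattice, of the cell with index `p.2.2` of the grid with offset `p.1` in the
`k`-block with index `p.2.1`. -/
def cellOrigin (m k : ℕ) {K b : ℕ}
    (p : (Fin d → Fin m) × (Fin d → Fin b) × (Fin d → Fin K)) : Site d :=
  fun j => k * (p.2.1 j : ℕ) + (m * (p.2.2 j : ℕ) + p.1 j)

lemma cellOrigin_injective (hK : m * (K + 1) ≤ k) {b : ℕ} :
    Function.Injective (cellOrigin (d := d) m k (K := K) (b := b)) := by
  rintro ⟨c, r, s⟩ ⟨c', r', s'⟩ h
  have hlt : ∀ (s : Fin K) (c : Fin m), m * (s : ℕ) + c < k := fun s c =>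
    (Nat.le_add_right _ _).trans_lt (mul_add_add_lt_of_mul_succ_le hK s c c)
  have hdigits : ∀ j, (r j : ℕ) = r' j ∧ (s j : ℕ) = s' j ∧ (c j : ℕ) = c' j := fun j =>
    have hblock := eq_and_eq_of_mul_add_eq (hlt (s j) (c j)) (hlt (s' j) (c' j)) (congrFun h j)
    ⟨hblock.1, eq_and_eq_of_mul_add_eq (c j).2 (c' j).2 hblock.2⟩
  obtain rfl : c = c' := funext fun j => Fin.ext (hdigits j).2.2
  obtain rfl : r = r' := funext fun j => Fin.ext (hdigits j).1
  obtain rfl : s = s' := funext fun j => Fin.ext (hdigits j).2.1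
  rfl

lemma cellOrigin_mem_cube (hK : m * (K + 1) ≤ k) {n : ℕ}
    (p : (Fin d → Fin m) × (Fin d → Fin (n / k)) × (Fin d → Fin K)) :
    cellOrigin m k p ∈ cube (0 : Site d) n := mem_cube_zero.2 fun j => by
  have hlt : m * (p.2.2 j : ℕ) + p.1 j < k :=
    (Nat.le_add_right _ _).trans_lt (mul_add_add_lt_of_mul_succ_le hK (p.2.2 j) (p.1 j) (p.1 j))
  calc cellOrigin m k p j < k * (p.2.1 j : ℕ) + k := Nat.add_lt_add_left hlt _
    _ = k * (p.2.1 j + 1) := by ring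
    _ ≤ k * (n / k) := Nat.mul_le_mul_left k (p.2.1 j).2
    _ ≤ n := Nat.mul_div_le n k

-- Over all offsets, the grid cells have distinct origins, so their costs add up to at most the
-- ergodic sum of the cost.
lemma entH_empDist_le (hK : m * (K + 1) ≤ k) (hA : 2 ≤ A) {n : ℕ} (hn : 1 ≤ n / k)
    (hq : ∀ w, 0 < q w) (hq1 : ∑ w, q w = 1) (x : Config A d) :
    (m : ℝ) ^ d * (((n / k : ℕ) : ℝ) ^ d * entH A (empDist x k n)) ≤
      ergSum d (fun y => -Real.logb A (q (wordAt y m 0))) n x +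
      (m : ℝ) ^ d * (((n / k : ℕ) : ℝ) ^ d * ((k : ℝ) ^ d - (m * K : ℕ) ^ d)) := by
  classical
  let cost : Site d → ℝ := fun t => -Real.logb A (q (wordAt x m t))
  have hoffsets := Finset.sum_le_sum fun (c : Fin d → Fin m) (_ : c ∈ Finset.univ) =>
    entH_empDist_le_offset hK c hA hn hq hq1 x
  simp only [Finset.sum_add_distrib, Finset.sum_const, Finset.card_univ, Fintype.card_fun,
    Fintype.card_fin, nsmul_eq_mul, Nat.cast_pow] at hoffsets
  refine hoffsets.trans (add_le_add_left ?_ _)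
  simp only [ergSum, wordAt_vadd, zero_add]
  calc _ = ∑ p, cost (cellOrigin m k p) := by simp only [Fintype.sum_prod_type]; rfl
    _ = ∑ t ∈ Finset.univ.map ⟨cellOrigin m k, cellOrigin_injective hK⟩, cost t := by
        rw [Finset.sum_map]
        rfl
    _ ≤ _ := Finset.sum_le_sum_of_subset_of_nonneg
        (fun t ht => by
          obtain ⟨p, -, rfl⟩ := Finset.mem_map.1 ht
          exact cellOrigin_mem_cube hK p)
        fun t _ _ => neg_logb_nonneg_of_sum_eq_one hA hq hq1 _

end GridCode

section UpperBound

variable {μ : Measure (Config A d)} [IsProbabilityMeasure μ] {k : ℕ → ℕ}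

lemma integral_comp_wordAt (μ : Measure (Config A d)) [IsFiniteMeasure μ] (n : ℕ)
    (g : Word A d n → ℝ) : ∫ x, g (wordAt x n 0) ∂μ = ∑ w, wordDist μ n w * g w := by
  have hword := measurable_wordAt (A := A) n (0 : Site d)
  rw [← integral_map (f := g) hword.aemeasurable (measurable_of_finite g).aestronglyMeasurable,
    integral_fintype .of_finite]
  exact Finset.sum_congr rfl fun w _ => by rw [wordDist_eq_measureReal_map, smul_eq_mul]

lemma integrable_comp_wordAt (μ : Measure (Config A d)) [IsFiniteMeasure μ] (n : ℕ)
    (g : Word A d n → ℝ) : Integrable (fun x => g (wordAt x n 0)) μ :=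
  (Integrable.of_finite (μ := μ.map (wordAt · n 0)) (f := g)).comp_measurable
    (measurable_wordAt n 0)

-- Mixing `μ^m` with the uniform distribution makes the code positive at the cost of one symbol.
lemma exists_pos_integral_neg_logb_le (hA : 2 ≤ A) (μ : Measure (Config A d))
    [IsProbabilityMeasure μ] (m : ℕ) :
    ∃ q : Word A d m → ℝ, (∀ w, 0 < q w) ∧ ∑ w, q w = 1 ∧
      ∫ x, -Real.logb A (q (wordAt x m 0)) ∂μ ≤ entH A (wordDist μ m) + 1 := by
  have : NeZero A := ⟨by omega⟩
  set C : ℝ := (Fintype.card (Word A d m) : ℝ) with hC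
  have hC0 : 0 < C := by positivity
  let q : Word A d m → ℝ := fun w => (wordDist μ m w + C⁻¹) / 2
  refine ⟨q, fun w => by have := wordDist_nonneg μ m w; positivity, ?_, ?_⟩
  · rw [← Finset.sum_div, Finset.sum_add_distrib, sum_wordDist, Finset.sum_const,
      Finset.card_univ, nsmul_eq_mul, ← hC, mul_inv_cancel₀ hC0.ne']
    norm_num
  have hcost : ∀ w, wordDist μ m w * -Real.logb A (q w) ≤
      -(wordDist μ m w * Real.logb A (wordDist μ m w)) + wordDist μ m w := fun w => by
    rcases (wordDist_nonneg μ m w).eq_or_lt with h0 | h0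
    · simp [← h0]
    · have := mul_le_mul_of_nonneg_left
        (neg_logb_midpoint_le hA h0 (inv_nonneg.2 hC0.le)) h0.le
      linarith
  rw [integral_comp_wordAt μ m fun w => -Real.logb A (q w)]
  refine (Finset.sum_le_sum fun w _ => hcost w).trans_eq ?_
  rw [Finset.sum_add_distrib, sum_wordDist, Finset.sum_neg_distrib, entH]

lemma tendsto_mul_div_sub_one_div {m : ℕ} (hm : 0 < m) :
    Tendsto (fun k : ℕ => ((m * (k / m - 1) : ℕ) : ℝ) / k) atTop (𝓝 1) := by
  refine tendsto_div_one_of_le_add (e := fun _ => 2 * m) (.of_forall fun k => ?_)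
    (.of_forall fun k => ?_) (tendsto_const_div_atTop_nhds_zero_nat _)
  · exact (Nat.mul_le_mul_left m (Nat.sub_le _ _)).trans (Nat.mul_div_le k m)
  · have hmod := Nat.div_add_mod k m
    have hlt := Nat.mod_lt k hm
    rw [Nat.mul_sub, mul_one]
    omega

lemma HasEntropyRate.exists_integral_neg_logb_lt (hA : 2 ≤ A) (hd : 1 ≤ d) {h : ℝ}
    (hrate : HasEntropyRate μ h) {c : ℝ} (hc : h < c) :
    ∃ m ≥ 1, ∃ q : Word A d m → ℝ, (∀ w, 0 < q w) ∧ ∑ w, q w = 1 ∧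
      ∫ x, -Real.logb A (q (wordAt x m 0)) ∂μ < c * (m : ℝ) ^ d := by
  have hlim : Tendsto (fun n : ℕ => (entH A (wordDist μ n) + 1) / (n : ℝ) ^ d) atTop (𝓝 h) := by
    simpa only [add_div, add_zero] using
      hrate.add ((tendsto_natCast_pow_atTop hd).const_div_atTop 1)
  obtain ⟨m, hm, hm1⟩ := ((hlim.eventually_lt_const hc).and (eventually_ge_atTop 1)).exists
  obtain ⟨q, hq, hq1, hint⟩ := exists_pos_integral_neg_logb_le hA μ m
  exact ⟨m, hm1, q, hq, hq1, hint.trans_lt ((div_lt_iff₀ (by positivity)).1 hm)⟩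

theorem HasEntropyRate.eventually_entH_empDist_lt (hA : 2 ≤ A) (hd : 1 ≤ d)
    [ErgodicVAdd (Site d) (Config A d) μ] {h : ℝ} (hrate : HasEntropyRate μ h)
    (hk : Tendsto k atTop atTop) (hkn : Tendsto (fun n => (k n : ℝ) / n) atTop (𝓝 0)) {c : ℝ}
    (hc : h < c) :
    ∀ᵐ x ∂μ, ∀ᶠ n in atTop, entH A (empDist x (k n) n) < c * (k n : ℝ) ^ d := by
  obtain ⟨c', hc', hc'c⟩ := exists_between hc
  obtain ⟨m, hm, q, hq, hq1, hint⟩ := hrate.exists_integral_neg_logb_lt hA hd hc'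
  have hratio : Tendsto (fun n => c' / (((n / k n * k n : ℕ) : ℝ) / n) ^ d +
      (1 - (((m * (k n / m - 1) : ℕ) : ℝ) / k n) ^ d)) atTop (𝓝 c') := by
    have hcov := (tendsto_const_nhds (x := c')).div
      ((tendsto_div_mul_self_div hk hkn).pow d) (by simp)
    have hgrid := (((tendsto_mul_div_sub_one_div hm).comp hk).pow d).const_sub 1
    simpa using hcov.add hgrid
  have hmeas : Measurable fun x : Config A d => -Real.logb A (q (wordAt x m 0)) :=
    (measurable_of_finite fun w => -Real.logb A (q w)).comp (measurable_wordAt m 0)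
  filter_upwards [ae_eventually_ergSum_lt (d := d) hmeas
    (fun x => neg_logb_nonneg_of_sum_eq_one hA hq hq1 (wordAt x m 0))
    (integrable_comp_wordAt μ m fun w => -Real.logb A (q w)) hint] with x hx
  filter_upwards [hx, hratio.eventually_lt_const hc'c, hk.eventually_ge_atTop m,
    eventually_one_le_div hk hkn] with n herg hr hmk hn
  have hK : m * (k n / m - 1 + 1) ≤ k n := by
    rw [Nat.sub_add_cancel (Nat.div_pos hmk hm)]
    exact Nat.mul_div_le (k n) m
  have hk0 : (0 : ℝ) < k n := by exact_mod_cast hm.trans hmk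
  have : (0 : ℝ) < n := by
    exact_mod_cast Nat.pos_of_ne_zero fun h0 => by simp [h0] at hn
  have hmn : (0 : ℝ) < (m : ℝ) ^ d * ((n / k n : ℕ) : ℝ) ^ d := by positivity
  refine lt_of_le_of_lt ?_ (mul_lt_mul_of_pos_right hr (pow_pos hk0 d))
  refine le_of_mul_le_mul_left ?_ hmn
  rw [mul_assoc]
  refine (entH_empDist_le hK hA hn hq hq1 x).trans
    ((add_le_add_left herg.le _).trans_eq ?_)
  rw [Nat.cast_mul (n / k n)]
  simp only [div_pow, mul_pow]
  field_simp

end UpperBound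

/-! ### Convergence -/

section Convergence

lemma ae_tendsto_of_forall_eventually_lt {Ω ι : Type*} [MeasurableSpace Ω] {μ : Measure Ω}
    {l : Filter ι} {f : ι → Ω → ℝ} {h : ℝ}
    (hlow : ∀ c < h, ∀ᵐ x ∂μ, ∀ᶠ n in l, c < f n x)
    (hup : ∀ c > h, ∀ᵐ x ∂μ, ∀ᶠ n in l, f n x < c) :
    ∀ᵐ x ∂μ, Tendsto (f · x) l (𝓝 h) := by
  obtain ⟨a, -, ha, halim⟩ := exists_seq_strictMono_tendsto h
  obtain ⟨b, -, hb, hblim⟩ := exists_seq_strictAnti_tendsto h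
  filter_upwards [ae_all_iff.2 fun j => hlow (a j) (ha j), ae_all_iff.2 fun j => hup (b j) (hb j)]
    with x hxlow hxup
  refine tendsto_order.2 ⟨fun c hc => ?_, fun c hc => ?_⟩
  · obtain ⟨j, hj⟩ := (halim.eventually_const_lt hc).exists
    exact (hxlow j).mono fun n hn => hj.trans hn
  · obtain ⟨j, hj⟩ := (hblim.eventually_lt_const hc).exists
    exact (hxup j).mono fun n hn => hn.trans hj

lemma kOf_pow_le_logb (hA : 2 ≤ A) (hd : 1 ≤ d) {n : ℕ} (hn : 1 ≤ n) :
    (kOf A d n : ℝ) ^ d ≤ Real.logb A ((n : ℝ) ^ d) := by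
  have hlog : 0 ≤ Real.logb A ((n : ℝ) ^ d) :=
    Real.logb_nonneg (by exact_mod_cast hA) (one_le_pow₀ (by exact_mod_cast hn))
  calc (kOf A d n : ℝ) ^ d ≤ (Real.logb A ((n : ℝ) ^ d) ^ (1 / (d : ℝ))) ^ d := by
        gcongr
        exact Nat.floor_le (Real.rpow_nonneg hlog _)
    _ = _ := by rw [one_div, Real.rpow_inv_natCast_pow hlog (by omega)]

lemma tendsto_kOf_atTop (hA : 2 ≤ A) (hd : 1 ≤ d) : Tendsto (kOf A d) atTop atTop :=
  tendsto_nat_floor_atTop.comp <| (tendsto_rpow_atTop (by positivity)).comp <|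
    (Real.tendsto_logb_atTop (by exact_mod_cast hA)).comp (tendsto_natCast_pow_atTop hd)

end Convergence

theorem empirical_entropy_convergence_general
    (A d : ℕ) (hA : 2 ≤ A) (hd : 1 ≤ d)
    (μ : Measure (Config A d)) [IsProbabilityMeasure μ] (hμ : ErgodicShift μ)
    (h : ℝ) (hrate : HasEntropyRate μ h) (k : ℕ → ℕ) (hk : Tendsto k atTop atTop)
    (hgrowth : ∀ᶠ n in atTop, (k n : ℝ) ^ d ≤ Real.logb A ((n : ℝ) ^ d)) :
    ∀ᵐ x ∂μ, Tendsto (fun n => entH A (empDist x (k n) n) / (k n : ℝ) ^ d) atTop (𝓝 h) := by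
  have := hμ.ergodicVAdd
  have hkpos : ∀ᶠ n in atTop, (0 : ℝ) < (k n : ℝ) ^ d := by
    filter_upwards [hk.eventually_ge_atTop 1] with n hn
    positivity
  refine ae_tendsto_of_forall_eventually_lt (fun c hc => ?_) fun c hc => ?_
  · filter_upwards [hrate.eventually_lt_entH_empDist hA hd hk hgrowth hc] with x hx
    filter_upwards [hx, hkpos] with n hn hpos
    exact (lt_div_iff₀ hpos).2 hn
  · have hkn := tendsto_div_zero_of_pow_le_logb hd hgrowth
    filter_upwards [hrate.eventually_entH_empDist_lt hA hd hk hkn hc] with x hx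
    filter_upwards [hx, hkpos] with n hn hpos
    exact (div_lt_iff₀ hpos).2 hn

/-- The empirical per-site `k(n)`-block entropy converges to the entropy
rate, almost surely, where `k(n) = ⌊(log_A n^d)^{1/d}⌋`. -/
theorem empirical_entropy_convergence
    (A d : ℕ) (hA : 2 ≤ A) (hd : 1 ≤ d)
    (μ : Measure (Config A d)) [IsProbabilityMeasure μ] (hμ : ErgodicShift μ)
    (h : ℝ) (hrate : HasEntropyRate μ h) :
    ∀ᵐ x ∂μ,
      Tendsto (fun n : ℕ =>
          entH A (empDist x (kOf A d n) n) / ((kOf A d n : ℕ) : ℝ) ^ d)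
        atTop (𝓝 h) :=
  empirical_entropy_convergence_general A d hA hd μ hμ h hrate (kOf A d) (tendsto_kOf_atTop hA hd)
    ((eventually_ge_atTop 1).mono fun _ hn => kOf_pow_le_logb hA hd hn)

end SRU1408
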